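/- Fix Ω₀ > 0 and set Ω(ε) = Ω₀/ε. There exist a constant C = C(Ω₀) and ε₀ > 0 such that for all 0 < ε < ε₀ and every GP minimizer Ψ of E^GP_{ε,Ω(ε)}, the density satisfies ‖ |Ψ|² − ρ^TF ‖_{L¹(B₁)} ≤ C √(ε|log ε|), where ρ^TF is the unique normalized minimizer of the Thomas–Fermi functional associated with Ω₀ (explicitly, ρ^TF(x) = 1/π − (Ω₀²/16)(1 − 2|x|²) if Ω₀ ≤ 4/√π and ρ^TF(x) = max(0, (Ω₀²/8)(|x|² − 1) + Ω₀/(2√π)) if Ω₀ > 4/√π). -/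

import Mathlib

open MeasureTheory Real Filter

noncomputable section

/-- Points of the plane. -/
abbrev Pt : Type := EuclideanSpace ℝ (Fin 2)

/-- The open unit disc. -/
def B1 : Set Pt := Metric.ball 0 1

/-- First partial derivative of a complex-valued function. -/
def pd1 (Ψ : Pt → ℂ) (x : Pt) : ℂ := fderiv ℝ Ψ x (EuclideanSpace.single 0 1)

/-- Second partial derivative of a complex-valued function. -/
def pd2 (Ψ : Pt → ℂ) (x : Pt) : ℂ := fderiv ℝ Ψ x (EuclideanSpace.single 1 1)

/-- Angular momentum operator `L = -i (x₁ ∂₂ - x₂ ∂₁)`. -/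
def angMom (Ψ : Pt → ℂ) (x : Pt) : ℂ :=
  -Complex.I * ((x 0 : ℂ) * pd2 Ψ x - (x 1 : ℂ) * pd1 Ψ x)

/-- The Gross-Pitaevskii energy density `|∇Ψ|² - Ω conj(Ψ) LΨ + |Ψ|⁴/ε²`. -/
def gpDensity (ε Ω : ℝ) (Ψ : Pt → ℂ) (x : Pt) : ℝ :=
  ‖pd1 Ψ x‖ ^ 2 + ‖pd2 Ψ x‖ ^ 2
    - Ω * (starRingEnd ℂ (Ψ x) * angMom Ψ x).re
    + ‖Ψ x‖ ^ 4 / ε ^ 2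

/-- The Gross-Pitaevskii functional on the unit disc. -/
def gpEnergy (ε Ω : ℝ) (Ψ : Pt → ℂ) : ℝ := ∫ x in B1, gpDensity ε Ω Ψ x

/-- Admissible (H¹, normalized) wave functions. -/
def gpAdm (Ψ : Pt → ℂ) : Prop :=
  DifferentiableOn ℝ Ψ B1 ∧
  IntegrableOn (fun x => ‖Ψ x‖ ^ 2) B1 ∧
  IntegrableOn (fun x => ‖pd1 Ψ x‖ ^ 2 + ‖pd2 Ψ x‖ ^ 2) B1 ∧
  IntegrableOn (fun x => ‖Ψ x‖ ^ 4) B1 ∧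
  IntegrableOn (fun x => (starRingEnd ℂ (Ψ x) * angMom Ψ x).re) B1 ∧
  (∫ x in B1, ‖Ψ x‖ ^ 2) = 1

/-- The GP ground-state energy: infimum of the functional over normalized functions. -/
def gpGround (ε Ω : ℝ) : ℝ := sInf {E | ∃ Ψ : Pt → ℂ, gpAdm Ψ ∧ E = gpEnergy ε Ω Ψ}

/-- A GP minimizer: a normalized admissible function attaining the infimum. -/
def IsGPMinimizer (ε Ω : ℝ) (Ψ : Pt → ℂ) : Prop :=
  gpAdm Ψ ∧ gpEnergy ε Ω Ψ = gpGround ε Ω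

/-- The Thomas-Fermi functional. -/
def tfEnergy (Ω₀ : ℝ) (ρ : Pt → ℝ) : ℝ :=
  ∫ x in B1, ((ρ x) ^ 2 - Ω₀ ^ 2 * ‖x‖ ^ 2 * ρ x / 4)

/-- Admissible TF densities: nonnegative, in L²(B₁), of total mass one. -/
def tfAdm (ρ : Pt → ℝ) : Prop :=
  IntegrableOn ρ B1 ∧ IntegrableOn (fun x => (ρ x) ^ 2) B1 ∧
  (∀ᵐ x ∂(volume.restrict B1), 0 ≤ ρ x) ∧ (∫ x in B1, ρ x) = 1

/-- The TF ground-state energy. -/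
def tfGround (Ω₀ : ℝ) : ℝ := sInf {E | ∃ ρ : Pt → ℝ, tfAdm ρ ∧ E = tfEnergy Ω₀ ρ}

/-- Radius of the TF "hole". -/
def R0 (Ω₀ : ℝ) : ℝ := Real.sqrt (1 - 4 / (Real.sqrt π * Ω₀))

/-- The TF minimizer. -/
def rhoTF (Ω₀ : ℝ) (x : Pt) : ℝ :=
  if Ω₀ ≤ 4 / Real.sqrt π then 1 / π - Ω₀ ^ 2 / 16 * (1 - 2 * ‖x‖ ^ 2)
  else max 0 (Ω₀ ^ 2 / 8 * (‖x‖ ^ 2 - 1) + Ω₀ / (2 * Real.sqrt π))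

/-!
Completing the square turns the rotation into a magnetic field: with `A` the vector potential of
the rotation at speed `Ω₀ / ε`, one has `ε² E^GP[Ψ] = ε² ∫ |(∇ - i A) Ψ|² + E^TF[|Ψ|²]`. Strict
convexity and complementary slackness give `E^TF[ρ] ≥ E^TF[ρ^TF] + ‖ρ - ρ^TF‖²` in `L²` for every
admissible `ρ`, so by Cauchy-Schwarz it suffices to exhibit a normalized trial state with
`ε² E^GP ≤ E^TF[ρ^TF] + C ε |log ε|`.

Its modulus is a smoothing of `√ρ^TF`, and its phase is that of a function `F = A₁ + w A₂`, where
`A₁` and `A₂` are two combs of horizontal strips of width comparable to `√ε`, each strip carrying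
the phase of the Landau gauge centred on it. Then `|(∇ - i A) F|` is at most a multiple of
`1 / √ε`, and at each point `A₁` or `A₂` is bounded below. Averaging over `w` in the unit disc of
`ℂ` yields a `w` with `∫ 1 / (|F|² + ε) ≤ C |log ε|`, which controls both the kinetic energy and
the mass lost near the zeros of `F`.
-/

section L1

variable {α : Type*} [MeasurableSpace α] {μ : Measure α} {f g : α → ℝ}

lemma abs_integral_sub_integral_le (hf : Integrable f μ) (hg : Integrable g μ) :
    |∫ x, f x ∂μ - ∫ x, g x ∂μ| ≤ ∫ x, |f x - g x| ∂μ := by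
  rw [← integral_sub hf hg]
  exact abs_integral_le_integral_abs

lemma integral_abs_div_integral_sub_le (hf : Integrable f μ) (hg : Integrable g μ)
    (hf_nonneg : 0 ≤ᵐ[μ] f) (mass_pos : 0 < ∫ x, f x ∂μ) (mass_one : ∫ x, g x ∂μ = 1) :
    ∫ x, |f x / (∫ y, f y ∂μ) - g x| ∂μ ≤ 2 * ∫ x, |f x - g x| ∂μ := by
  set m := ∫ y, f y ∂μ
  have int_rescale : Integrable (fun x ↦ |1 - m| / m * f x) μ := hf.const_mul _
  have int_diff : Integrable (fun x ↦ |f x - g x|) μ := (hf.sub hg).abs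
  calc _ ≤ ∫ x, (|1 - m| / m * f x + |f x - g x|) ∂μ := by
        refine integral_mono_ae ((hf.div_const m).sub hg).abs (int_rescale.add int_diff) ?_
        filter_upwards [hf_nonneg] with x hx
        have rescale : |f x / m - f x| = |1 - m| / m * f x := by
          rw [show f x / m - f x = (1 - m) / m * f x by field_simp, abs_mul, abs_div,
            abs_of_pos mass_pos, abs_of_nonneg hx]
        exact rescale ▸ abs_sub_le _ _ _
    _ = |m - 1| + ∫ x, |f x - g x| ∂μ := by
        rw [integral_add int_rescale int_diff, integral_const_mul, div_mul_cancel₀ _ mass_pos.ne',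
          abs_sub_comm]
    _ ≤ _ := by
        rw [← mass_one, two_mul]
        gcongr
        exact abs_integral_sub_integral_le hf hg

lemma integral_abs_le_sqrt [IsFiniteMeasure μ] (hf : MemLp f 2 μ) :
    ∫ x, |f x| ∂μ ≤ √(μ.real Set.univ * ∫ x, f x ^ 2 ∂μ) := by
  have holder := integral_mul_le_Lp_mul_Lq_of_nonneg (μ := μ) HolderConjugate.two_two
    (f := fun x ↦ |f x|) (g := fun _ ↦ 1) (.of_forall fun x ↦ abs_nonneg _)
    (.of_forall fun _ ↦ zero_le_one) (by simpa using hf.norm) (memLp_const _)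
  rw [sqrt_mul measureReal_nonneg, sqrt_eq_rpow, sqrt_eq_rpow, mul_comm]
  simpa using holder

end L1

lemma hasDerivAt_max_zero_sq (s : ℝ) :
    HasDerivAt (fun t : ℝ ↦ max 0 t ^ 2) (2 * max 0 s) s := by
  rw [hasDerivAt_iff_isLittleO]
  refine (Asymptotics.isBigO_of_le _ fun t ↦ ?_).trans_isLittleO
    (Asymptotics.isLittleO_pow_sub_sub s one_lt_two)
  rw [norm_pow, norm_norm, norm_eq_abs, norm_eq_abs, sq_abs, smul_eq_mul, abs_le]
  rcases le_total 0 t with ht | ht <;> rcases le_total 0 s with hs | hs <;>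
    simp only [ht, hs, max_eq_left, max_eq_right] <;> constructor <;> nlinarith

lemma setIntegral_ball_fun_norm_addHaar {E F : Type*} [NormedAddCommGroup E] [NormedSpace ℝ E]
    [FiniteDimensional ℝ E] [MeasurableSpace E] [BorelSpace E] [Nontrivial E]
    [NormedAddCommGroup F] [NormedSpace ℝ F] (μ : Measure E) [μ.IsAddHaarMeasure]
    (f : ℝ → F) {R : ℝ} (hR : 0 ≤ R) :
    ∫ x in Metric.ball (0 : E) R, f ‖x‖ ∂μ = Module.finrank ℝ E • μ.real (Metric.ball 0 1) •
      ∫ r in (0 : ℝ)..R, r ^ (Module.finrank ℝ E - 1) • f r := by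
  have indicator_ball : (Metric.ball (0 : E) R).indicator (fun x ↦ f ‖x‖) =
      fun x ↦ (Set.Iio R).indicator f ‖x‖ := by
    ext x; simp [Set.indicator]
  rw [← integral_indicator Metric.isOpen_ball.measurableSet, indicator_ball,
    integral_fun_norm_addHaar μ, intervalIntegral.integral_of_le hR, integral_Ioc_eq_integral_Ioo]
  congr 2
  simp_rw [← Set.indicator_smul_apply (Set.Iio R) (fun r : ℝ ↦ r ^ (Module.finrank ℝ E - 1)) f]
  rw [setIntegral_indicator measurableSet_Iio, Set.Ioi_inter_Iio]

lemma norm_sq_eq_sq_add_sq (x : Pt) : ‖x‖ ^ 2 = x 0 ^ 2 + x 1 ^ 2 := by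
  simp [EuclideanSpace.norm_sq_eq, Fin.sum_univ_two]

lemma mem_B1 {x : Pt} : x ∈ B1 ↔ ‖x‖ < 1 := by simp [B1]

lemma measurableSet_B1 : MeasurableSet B1 := Metric.isOpen_ball.measurableSet

instance isFiniteMeasure_restrict_ball {X : Type*} [PseudoMetricSpace X] [ProperSpace X]
    [MeasurableSpace X] (μ : Measure X) [IsFiniteMeasureOnCompacts μ] (x : X) (r : ℝ) :
    IsFiniteMeasure (μ.restrict (Metric.ball x r)) :=
  isFiniteMeasure_restrict.2 measure_ball_lt_top.ne

instance isFiniteMeasure_restrict_B1 : IsFiniteMeasure (volume.restrict B1) :=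
  isFiniteMeasure_restrict_ball _ _ _

lemma volume_real_B1 : (volume : Measure Pt).real B1 = π := by
  simp [B1, Measure.real, pi_pos.le]

lemma setIntegral_B1_const (c : ℝ) : ∫ _ in B1, c = c * π := by
  simp [volume_real_B1, mul_comm]

lemma ae_B1_of_forall {p : Pt → Prop} (h : ∀ x ∈ B1, p x) : ∀ᵐ x ∂volume.restrict B1, p x :=
  ae_restrict_of_forall_mem measurableSet_B1 h

lemma memLp_ball_of_continuous {X E : Type*} [PseudoMetricSpace X] [ProperSpace X]
    [MeasurableSpace X] [OpensMeasurableSpace X] [NormedAddCommGroup E] {μ : Measure X}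
    [IsFiniteMeasureOnCompacts μ] {f : X → E} (hf : Continuous f) (p : ENNReal) (x : X) (r : ℝ) :
    MemLp f p (μ.restrict (Metric.ball x r)) := by
  obtain ⟨C, hC⟩ := (isCompact_closedBall x r).exists_bound_of_continuousOn hf.continuousOn
  refine MemLp.of_bound ?_ C (ae_restrict_of_forall_mem Metric.isOpen_ball.measurableSet
    fun y hy ↦ hC y (Metric.ball_subset_closedBall hy))
  exact (hf.continuousOn.aestronglyMeasurable_of_isCompact (isCompact_closedBall x r)
    measurableSet_closedBall).mono_set Metric.ball_subset_closedBall

lemma integrableOn_ball_of_continuous {X E : Type*} [PseudoMetricSpace X] [ProperSpace X]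
    [MeasurableSpace X] [OpensMeasurableSpace X] [NormedAddCommGroup E] {μ : Measure X}
    [IsFiniteMeasureOnCompacts μ] {f : X → E} (hf : Continuous f) (x : X) (r : ℝ) :
    IntegrableOn f (Metric.ball x r) μ :=
  (memLp_ball_of_continuous hf 1 x r).integrable le_rfl

lemma memLp_B1_of_continuous {E : Type*} [NormedAddCommGroup E] {f : Pt → E}
    (hf : Continuous f) (p : ENNReal) : MemLp f p (volume.restrict B1) :=
  memLp_ball_of_continuous hf p 0 1

lemma integrableOn_B1_of_continuous {E : Type*} [NormedAddCommGroup E] {f : Pt → E}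
    (hf : Continuous f) : IntegrableOn f B1 :=
  integrableOn_ball_of_continuous hf 0 1

lemma integral_B1_max_zero_affine {a : ℝ} (ha : 0 < a) (b : ℝ) :
    ∫ x in B1, max 0 (a * ‖x‖ ^ 2 + b) = π / (2 * a) * (max 0 (a + b) ^ 2 - max 0 b ^ 2) := by
  have primitive (r : ℝ) : HasDerivAt (fun r ↦ max 0 (a * r ^ 2 + b) ^ 2 / (4 * a))
      (r * max 0 (a * r ^ 2 + b)) r := by
    have inner : HasDerivAt (fun r : ℝ ↦ a * r ^ 2 + b) (a * (2 * r)) r := by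
      simpa using ((hasDerivAt_pow 2 r).const_mul a).add_const b
    refine (((hasDerivAt_max_zero_sq _).comp r inner).div_const (4 * a)).congr_deriv ?_
    field_simp
    ring
  have integrable : IntervalIntegrable (fun r ↦ r * max 0 (a * r ^ 2 + b)) volume 0 1 :=
    Continuous.intervalIntegrable (by fun_prop) _ _
  rw [B1, setIntegral_ball_fun_norm_addHaar volume (fun r ↦ max 0 (a * r ^ 2 + b)) zero_le_one]
  change _ • volume.real B1 • _ = _
  simp only [finrank_euclideanSpace, Fintype.card_fin, Nat.add_one_sub_one, pow_one, smul_eq_mul,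
    nsmul_eq_mul, volume_real_B1]
  rw [intervalIntegral.integral_eq_sub_of_hasDerivAt (fun r _ ↦ primitive r) integrable]
  field_simp
  simp only [Nat.cast_ofNat, ne_eq, OfNat.ofNat_ne_zero, not_false_eq_true, zero_pow, mul_zero,
    zero_add]
  ring

/-! ### The Thomas-Fermi problem -/

/-- Half the chemical potential of the Thomas-Fermi problem: the constant for which
`max 0 (Ω₀ ^ 2 / 8 * ‖x‖ ^ 2 + tfShift Ω₀)` has mass one on the disc. -/
def tfShift (Ω₀ : ℝ) : ℝ :=
  if Ω₀ ≤ 4 / √π then 1 / π - Ω₀ ^ 2 / 16 else Ω₀ / (2 * √π) - Ω₀ ^ 2 / 8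

/-- The affine function of `‖x‖ ^ 2` whose positive part is the Thomas-Fermi minimizer. -/
def tfProfile (Ω₀ : ℝ) (x : Pt) : ℝ := Ω₀ ^ 2 / 8 * ‖x‖ ^ 2 + tfShift Ω₀

/-- An upper bound for `|tfProfile Ω₀|`, hence for the Thomas-Fermi minimizer, on the disc. -/
def tfBound (Ω₀ : ℝ) : ℝ := Ω₀ ^ 2 / 8 + |tfShift Ω₀|

lemma tfShift_nonneg {Ω₀ : ℝ} (hΩ : 0 < Ω₀) (h : Ω₀ ≤ 4 / √π) : 0 ≤ tfShift Ω₀ := by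
  have h_sq : Ω₀ ^ 2 ≤ (4 / √π) ^ 2 := by gcongr
  rw [div_pow, sq_sqrt pi_pos.le, le_div_iff₀ pi_pos] at h_sq
  rw [tfShift, if_pos h, sub_nonneg, div_le_div_iff₀ (by norm_num) pi_pos]
  linarith

lemma tfShift_nonpos {Ω₀ : ℝ} (hΩ : 0 < Ω₀) (h : 4 / √π < Ω₀) : tfShift Ω₀ ≤ 0 := by
  rw [div_lt_iff₀ (by positivity)] at h
  rw [tfShift, if_neg (not_le.2 (by rwa [div_lt_iff₀ (by positivity)])), sub_nonpos,
    div_le_div_iff₀ (by positivity) (by positivity)]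
  nlinarith

lemma rhoTF_eq_max {Ω₀ : ℝ} (hΩ : 0 < Ω₀) (x : Pt) : rhoTF Ω₀ x = max 0 (tfProfile Ω₀ x) := by
  rcases le_or_gt Ω₀ (4 / √π) with h | h
  · have h_nonneg : 0 ≤ tfProfile Ω₀ x := add_nonneg (by positivity) (tfShift_nonneg hΩ h)
    rw [max_eq_right h_nonneg, rhoTF, tfProfile, tfShift, if_pos h, if_pos h]
    ring
  · rw [rhoTF, tfProfile, tfShift, if_neg h.not_ge, if_neg h.not_ge]
    ring_nf

lemma integral_rhoTF {Ω₀ : ℝ} (hΩ : 0 < Ω₀) : ∫ x in B1, rhoTF Ω₀ x = 1 := by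
  simp_rw [rhoTF_eq_max hΩ, tfProfile]
  rw [integral_B1_max_zero_affine (by positivity)]
  rcases le_or_gt Ω₀ (4 / √π) with h | h
  · rw [max_eq_right (tfShift_nonneg hΩ h),
      max_eq_right (add_nonneg (by positivity) (tfShift_nonneg hΩ h)), tfShift, if_pos h]
    field_simp
    ring
  · have h_sum : Ω₀ ^ 2 / 8 + tfShift Ω₀ = Ω₀ / (2 * √π) := by
      rw [tfShift, if_neg h.not_ge]; ring
    rw [max_eq_left (tfShift_nonpos hΩ h), h_sum, max_eq_right (by positivity), div_pow, mul_pow,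
      sq_sqrt pi_pos.le]
    field_simp
    ring

lemma contDiff_tfProfile (Ω₀ : ℝ) {n : WithTop ℕ∞} : ContDiff ℝ n (tfProfile Ω₀) :=
  (contDiff_const.mul (contDiff_norm_sq ℝ)).add contDiff_const

lemma continuous_tfProfile (Ω₀ : ℝ) : Continuous (tfProfile Ω₀) :=
  (contDiff_tfProfile Ω₀ (n := 0)).continuous

lemma continuous_rhoTF {Ω₀ : ℝ} (hΩ : 0 < Ω₀) : Continuous (rhoTF Ω₀) := by
  rw [funext (rhoTF_eq_max hΩ)]
  exact continuous_const.max (continuous_tfProfile Ω₀)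

lemma tfBound_nonneg (Ω₀ : ℝ) : 0 ≤ tfBound Ω₀ := by unfold tfBound; positivity

lemma abs_tfProfile_le (Ω₀ : ℝ) {x : Pt} (hx : x ∈ B1) : |tfProfile Ω₀ x| ≤ tfBound Ω₀ := by
  have h_sq : ‖x‖ ^ 2 ≤ 1 := pow_le_one₀ (norm_nonneg x) (mem_B1.1 hx).le
  refine (abs_add_le _ _).trans (add_le_add_left ?_ _)
  rw [abs_of_nonneg (by positivity)]
  exact mul_le_of_le_one_right (by positivity) h_sq

lemma max_zero_tfProfile_le (Ω₀ : ℝ) {x : Pt} (hx : x ∈ B1) :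
    max 0 (tfProfile Ω₀ x) ≤ tfBound Ω₀ :=
  max_le (tfBound_nonneg Ω₀) ((le_abs_self _).trans (abs_tfProfile_le Ω₀ hx))

lemma abs_rhoTF_le {Ω₀ : ℝ} (hΩ : 0 < Ω₀) {x : Pt} (hx : x ∈ B1) : |rhoTF Ω₀ x| ≤ tfBound Ω₀ := by
  rw [rhoTF_eq_max hΩ, abs_of_nonneg (le_max_left _ _)]
  exact max_zero_tfProfile_le Ω₀ hx

lemma integrableOn_tfDensity (Ω₀ : ℝ) {ρ : Pt → ℝ} (hρ : MemLp ρ 2 (volume.restrict B1)) :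
    IntegrableOn (fun x ↦ ρ x ^ 2 - Ω₀ ^ 2 * ‖x‖ ^ 2 * ρ x / 4) B1 := by
  have potential : MemLp (fun x : Pt ↦ Ω₀ ^ 2 * ‖x‖ ^ 2) 2 (volume.restrict B1) :=
    memLp_B1_of_continuous (by fun_prop) 2
  exact hρ.integrable_sq.sub ((potential.integrable_mul hρ).div_const 4)

lemma tfAdm_memLp_two {ρ : Pt → ℝ} (hρ : tfAdm ρ) : MemLp ρ 2 (volume.restrict B1) :=
  (memLp_two_iff_integrable_sq hρ.1.aestronglyMeasurable).2 hρ.2.1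

-- Complementary slackness: the linear term `(2 rhoTF - Ω₀²‖x‖²/4) (t - rhoTF)` equals
-- `2 tfShift (t - rhoTF)` where `rhoTF > 0` and dominates it where `rhoTF = 0`.
lemma rhoTF_variational_inequality {Ω₀ : ℝ} (hΩ : 0 < Ω₀) (x : Pt) {t : ℝ} (ht : 0 ≤ t) :
    (rhoTF Ω₀ x ^ 2 - Ω₀ ^ 2 * ‖x‖ ^ 2 * rhoTF Ω₀ x / 4) + (t - rhoTF Ω₀ x) ^ 2
      + 2 * tfShift Ω₀ * (t - rhoTF Ω₀ x) ≤ t ^ 2 - Ω₀ ^ 2 * ‖x‖ ^ 2 * t / 4 := by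
  rw [rhoTF_eq_max hΩ]
  rcases le_total (tfProfile Ω₀ x) 0 with h | h
  · rw [max_eq_left h]
    unfold tfProfile at h
    nlinarith
  · rw [max_eq_right h]
    unfold tfProfile
    nlinarith

lemma tfEnergy_rhoTF_add_le {Ω₀ : ℝ} (hΩ : 0 < Ω₀) {ρ : Pt → ℝ} (hρ : tfAdm ρ) :
    tfEnergy Ω₀ (rhoTF Ω₀) + ∫ x in B1, (ρ x - rhoTF Ω₀ x) ^ 2 ≤ tfEnergy Ω₀ ρ := by
  have memLp_rhoTF := memLp_B1_of_continuous (continuous_rhoTF hΩ) 2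
  have int_tf := integrableOn_tfDensity Ω₀ memLp_rhoTF
  have int_sq : IntegrableOn (fun x ↦ (ρ x - rhoTF Ω₀ x) ^ 2) B1 :=
    ((tfAdm_memLp_two hρ).sub memLp_rhoTF).integrable_sq
  have int_rhoTF := integrableOn_B1_of_continuous (continuous_rhoTF hΩ)
  have int_lin : IntegrableOn (fun x ↦ 2 * tfShift Ω₀ * (ρ x - rhoTF Ω₀ x)) B1 :=
    (hρ.1.sub int_rhoTF).const_mul _
  have same_mass : ∫ x in B1, 2 * tfShift Ω₀ * (ρ x - rhoTF Ω₀ x) = 0 := by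
    rw [integral_const_mul, integral_sub hρ.1 int_rhoTF, hρ.2.2.2, integral_rhoTF hΩ, sub_self,
      mul_zero]
  calc tfEnergy Ω₀ (rhoTF Ω₀) + ∫ x in B1, (ρ x - rhoTF Ω₀ x) ^ 2
    _ = ∫ x in B1, ((rhoTF Ω₀ x ^ 2 - Ω₀ ^ 2 * ‖x‖ ^ 2 * rhoTF Ω₀ x / 4)
          + (ρ x - rhoTF Ω₀ x) ^ 2 + 2 * tfShift Ω₀ * (ρ x - rhoTF Ω₀ x)) := by
        rw [integral_add (by exact int_tf.add int_sq) int_lin, integral_add int_tf int_sq,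
          same_mass, add_zero, tfEnergy]
    _ ≤ tfEnergy Ω₀ ρ := by
        refine integral_mono_ae ((int_tf.add int_sq).add int_lin)
          (integrableOn_tfDensity Ω₀ (tfAdm_memLp_two hρ)) ?_
        filter_upwards [hρ.2.2.1] with x hx using rhoTF_variational_inequality hΩ x hx

lemma tfEnergy_le_add_integral_abs_sub (Ω₀ : ℝ) {ρ σ : Pt → ℝ} {a : ℝ}
    (hρ : MemLp ρ 2 (volume.restrict B1)) (hσ : MemLp σ 2 (volume.restrict B1))
    (hρa : ∀ x ∈ B1, |ρ x| ≤ a) (hσa : ∀ x ∈ B1, |σ x| ≤ a) :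
    tfEnergy Ω₀ ρ ≤ tfEnergy Ω₀ σ + (2 * a + Ω₀ ^ 2 / 4) * ∫ x in B1, |ρ x - σ x| := by
  have int_abs : IntegrableOn (fun x ↦ (2 * a + Ω₀ ^ 2 / 4) * |ρ x - σ x|) B1 :=
    ((hρ.sub hσ).integrable one_le_two).abs.const_mul _
  have int_σ := integrableOn_tfDensity Ω₀ hσ
  rw [tfEnergy, tfEnergy, ← integral_const_mul, ← integral_add int_σ int_abs]
  refine setIntegral_mono_on (integrableOn_tfDensity Ω₀ hρ) (int_σ.add int_abs)
    measurableSet_B1 fun x hx ↦ ?_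
  have lipschitz : |ρ x + σ x - Ω₀ ^ 2 * ‖x‖ ^ 2 / 4| ≤ 2 * a + Ω₀ ^ 2 / 4 := by
    have potential_le : Ω₀ ^ 2 * ‖x‖ ^ 2 ≤ Ω₀ ^ 2 :=
      mul_le_of_le_one_right (sq_nonneg _) (pow_le_one₀ (norm_nonneg x) (mem_B1.1 hx).le)
    have potential_nonneg : 0 ≤ Ω₀ ^ 2 * ‖x‖ ^ 2 := by positivity
    have hρx := abs_le.1 (hρa x hx)
    have hσx := abs_le.1 (hσa x hx)
    exact abs_le.2 ⟨by linarith, by linarith⟩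
  have product := (le_abs_self _).trans (abs_mul (ρ x + σ x - Ω₀ ^ 2 * ‖x‖ ^ 2 / 4) (ρ x - σ x)).le
  linarith [mul_le_mul_of_nonneg_right lipschitz (abs_nonneg (ρ x - σ x))]

/-! ### The magnetic form of the energy -/

/-- The vector potential of the rotation with speed `Ω`, as a linear form in `v`. -/
def vecPot (Ω : ℝ) (x v : Pt) : ℝ := Ω / 2 * (x 0 * v 1 - x 1 * v 0)

/-- The magnetic derivative `(∇ - i A) Ψ` at `x` in the direction `v`, with `A = vecPot Ω`. -/
def covDeriv (Ω : ℝ) (Ψ : Pt → ℂ) (x v : Pt) : ℂ :=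
  fderiv ℝ Ψ x v - Complex.I * vecPot Ω x v * Ψ x

/-- The magnetic kinetic energy density `|(∇ - i A) Ψ|²`. -/
def covGradSq (Ω : ℝ) (Ψ : Pt → ℂ) (x : Pt) : ℝ :=
  ‖covDeriv Ω Ψ x (EuclideanSpace.single 0 1)‖ ^ 2
    + ‖covDeriv Ω Ψ x (EuclideanSpace.single 1 1)‖ ^ 2

lemma covGradSq_nonneg (Ω : ℝ) (Ψ : Pt → ℂ) (x : Pt) : 0 ≤ covGradSq Ω Ψ x := by
  unfold covGradSq; positivity

lemma norm_sub_I_mul_sq (a z : ℂ) (p : ℝ) :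
    ‖a - Complex.I * p * z‖ ^ 2 =
      ‖a‖ ^ 2 - 2 * p * (starRingEnd ℂ z * (-Complex.I * a)).re + p ^ 2 * ‖z‖ ^ 2 := by
  simp only [Complex.sq_norm, Complex.normSq_apply, Complex.sub_re, Complex.sub_im,
    Complex.mul_re, Complex.mul_im, Complex.neg_re, Complex.neg_im, Complex.conj_re,
    Complex.conj_im, Complex.I_re, Complex.I_im, Complex.ofReal_re, Complex.ofReal_im]
  ring

lemma covGradSq_eq_gpDensity_sub {ε : ℝ} (hε : ε ≠ 0) (Ω₀ : ℝ) (Ψ : Pt → ℂ) (x : Pt) :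
    covGradSq (Ω₀ / ε) Ψ x = gpDensity ε (Ω₀ / ε) Ψ x
      - ((‖Ψ x‖ ^ 2) ^ 2 - Ω₀ ^ 2 * ‖x‖ ^ 2 * ‖Ψ x‖ ^ 2 / 4) / ε ^ 2 := by
  have momentum : (starRingEnd ℂ (Ψ x) * angMom Ψ x).re =
      x 0 * (starRingEnd ℂ (Ψ x) * (-Complex.I * pd2 Ψ x)).re
        - x 1 * (starRingEnd ℂ (Ψ x) * (-Complex.I * pd1 Ψ x)).re := by
    rw [← Complex.re_ofReal_mul, ← Complex.re_ofReal_mul, ← Complex.sub_re, angMom]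
    ring_nf
  have vecPot_single_zero :
      vecPot (Ω₀ / ε) x (EuclideanSpace.single 0 1) = -(Ω₀ / ε / 2 * x 1) := by
    simp [vecPot]
  have vecPot_single_one : vecPot (Ω₀ / ε) x (EuclideanSpace.single 1 1) = Ω₀ / ε / 2 * x 0 := by
    simp [vecPot]
  rw [covGradSq, covDeriv, covDeriv, norm_sub_I_mul_sq, norm_sub_I_mul_sq, gpDensity, momentum,
    norm_sq_eq_sq_add_sq x, vecPot_single_zero, vecPot_single_one, ← pd1, ← pd2]
  field_simp
  ring

lemma tfAdm_norm_sq {Ψ : Pt → ℂ} (hΨ : gpAdm Ψ) : tfAdm fun x ↦ ‖Ψ x‖ ^ 2 := by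
  obtain ⟨-, int_two, -, int_four, -, mass⟩ := hΨ
  exact ⟨int_two, by simpa only [← pow_mul] using int_four, .of_forall fun x ↦ by positivity, mass⟩

lemma integrableOn_gpDensity (ε Ω : ℝ) {Ψ : Pt → ℂ} (hΨ : gpAdm Ψ) :
    IntegrableOn (gpDensity ε Ω Ψ) B1 := by
  obtain ⟨-, -, int_grad, int_four, int_mom, -⟩ := hΨ
  exact (int_grad.sub (int_mom.const_mul Ω)).add (int_four.div_const _)

lemma sq_mul_gpEnergy {ε : ℝ} (hε : ε ≠ 0) (Ω₀ : ℝ) {Ψ : Pt → ℂ} (hΨ : gpAdm Ψ) :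
    ε ^ 2 * gpEnergy ε (Ω₀ / ε) Ψ =
      ε ^ 2 * (∫ x in B1, covGradSq (Ω₀ / ε) Ψ x) + tfEnergy Ω₀ fun x ↦ ‖Ψ x‖ ^ 2 := by
  have int_tf := integrableOn_tfDensity Ω₀ (tfAdm_memLp_two (tfAdm_norm_sq hΨ))
  simp_rw [covGradSq_eq_gpDensity_sub hε]
  rw [integral_sub (integrableOn_gpDensity ε _ hΨ) (int_tf.div_const _), integral_div, mul_sub,
    mul_div_cancel₀ _ (pow_ne_zero 2 hε)]
  exact (sub_add_cancel _ _).symm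

lemma tfEnergy_le_sq_mul_gpEnergy {ε : ℝ} (hε : ε ≠ 0) (Ω₀ : ℝ) {Ψ : Pt → ℂ} (hΨ : gpAdm Ψ) :
    (tfEnergy Ω₀ fun x ↦ ‖Ψ x‖ ^ 2) ≤ ε ^ 2 * gpEnergy ε (Ω₀ / ε) Ψ := by
  rw [sq_mul_gpEnergy hε Ω₀ hΨ]
  have : 0 ≤ ∫ x in B1, covGradSq (Ω₀ / ε) Ψ x :=
    integral_nonneg fun x ↦ covGradSq_nonneg _ Ψ x
  exact le_add_of_nonneg_left (by positivity)

lemma tfEnergy_rhoTF_add_le_sq_mul_gpEnergy {ε Ω₀ : ℝ} (hε : ε ≠ 0) (hΩ : 0 < Ω₀) {Ψ : Pt → ℂ}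
    (hΨ : gpAdm Ψ) :
    tfEnergy Ω₀ (rhoTF Ω₀) + ∫ x in B1, (‖Ψ x‖ ^ 2 - rhoTF Ω₀ x) ^ 2 ≤
      ε ^ 2 * gpEnergy ε (Ω₀ / ε) Ψ :=
  (tfEnergy_rhoTF_add_le hΩ (tfAdm_norm_sq hΨ)).trans (tfEnergy_le_sq_mul_gpEnergy hε Ω₀ hΨ)

lemma gpGround_le_gpEnergy {ε Ω₀ : ℝ} (hε : ε ≠ 0) (hΩ : 0 < Ω₀) {Φ : Pt → ℂ} (hΦ : gpAdm Φ) :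
    gpGround ε (Ω₀ / ε) ≤ gpEnergy ε (Ω₀ / ε) Φ := by
  refine csInf_le ⟨tfEnergy Ω₀ (rhoTF Ω₀) / ε ^ 2, ?_⟩ ⟨Φ, hΦ, rfl⟩
  rintro _ ⟨Ψ, hΨ, rfl⟩
  rw [div_le_iff₀' (by positivity)]
  have : 0 ≤ ∫ x in B1, (‖Ψ x‖ ^ 2 - rhoTF Ω₀ x) ^ 2 := integral_nonneg fun x ↦ sq_nonneg _
  linarith [tfEnergy_rhoTF_add_le_sq_mul_gpEnergy hε hΩ hΨ]

lemma gpAdm_of_contDiff {Φ : Pt → ℂ} (hΦ : ContDiff ℝ 1 Φ) (mass : ∫ x in B1, ‖Φ x‖ ^ 2 = 1) :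
    gpAdm Φ := by
  have cont := hΦ.continuous
  have cont_fderiv (v : Pt) : Continuous fun x ↦ fderiv ℝ Φ x v :=
    (hΦ.continuous_fderiv one_ne_zero).clm_apply continuous_const
  have cont_pd1 : Continuous (pd1 Φ) := cont_fderiv _
  have cont_pd2 : Continuous (pd2 Φ) := cont_fderiv _
  have cont_mom : Continuous (angMom Φ) := by unfold angMom; fun_prop
  refine ⟨(hΦ.differentiable one_ne_zero).differentiableOn, ?_, ?_, ?_, ?_, mass⟩ <;>
    refine integrableOn_B1_of_continuous ?_
  · fun_prop
  · fun_prop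
  · fun_prop
  · exact Complex.continuous_re.comp ((Complex.continuous_conj.comp cont).mul cont_mom)

section covDeriv

variable (Ω : ℝ) {Ψ : Pt → ℂ} {x : Pt} (v : Pt)

lemma covDeriv_add {Φ : Pt → ℂ} (hΨ : DifferentiableAt ℝ Ψ x) (hΦ : DifferentiableAt ℝ Φ x) :
    covDeriv Ω (fun y ↦ Ψ y + Φ y) x v = covDeriv Ω Ψ x v + covDeriv Ω Φ x v := by
  unfold covDeriv
  rw [fderiv_fun_add hΨ hΦ, add_apply]
  ring

lemma covDeriv_const_mul (hΨ : DifferentiableAt ℝ Ψ x) (w : ℂ) :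
    covDeriv Ω (fun y ↦ w * Ψ y) x v = w * covDeriv Ω Ψ x v := by
  unfold covDeriv
  rw [fderiv_const_mul hΨ, smul_apply, smul_eq_mul]
  ring

lemma norm_covDeriv_add_const_mul_le {Φ : Pt → ℂ} (hΨ : DifferentiableAt ℝ Ψ x)
    (hΦ : DifferentiableAt ℝ Φ x) (w : ℂ) :
    ‖covDeriv Ω (fun y ↦ Ψ y + w * Φ y) x v‖ ≤
      ‖covDeriv Ω Ψ x v‖ + ‖w‖ * ‖covDeriv Ω Φ x v‖ := by
  rw [covDeriv_add Ω v hΨ (hΦ.const_mul w), covDeriv_const_mul Ω v hΦ, ← norm_mul]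
  exact norm_add_le _ _

lemma covDeriv_sum {ι : Type*} (s : Finset ι) {f : ι → Pt → ℂ}
    (hf : ∀ i ∈ s, DifferentiableAt ℝ (f i) x) :
    covDeriv Ω (fun y ↦ ∑ i ∈ s, f i y) x v = ∑ i ∈ s, covDeriv Ω (f i) x v := by
  unfold covDeriv
  rw [fderiv_fun_sum hf, sum_apply, Finset.mul_sum, Finset.sum_sub_distrib]

lemma covDeriv_ofReal_mul {g : Pt → ℝ} (hg : DifferentiableAt ℝ g x)
    (hΨ : DifferentiableAt ℝ Ψ x) :
    covDeriv Ω (fun y ↦ (g y : ℂ) * Ψ y) x v =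
      (fderiv ℝ g x v : ℂ) * Ψ x + g x * covDeriv Ω Ψ x v := by
  have hasFDerivAt_g : HasFDerivAt (fun y ↦ (g y : ℂ)) (Complex.ofRealCLM ∘L fderiv ℝ g x) x :=
    Complex.ofRealCLM.hasFDerivAt.comp x hg.hasFDerivAt
  unfold covDeriv
  rw [(hasFDerivAt_g.fun_mul hΨ.hasFDerivAt).fderiv]
  simp only [add_apply, smul_apply, smul_eq_mul,
    ContinuousLinearMap.comp_apply, Complex.ofRealCLM_apply]
  ring

lemma covDeriv_cexp_ofReal_mul_I {θ : Pt → ℝ} (hθ : DifferentiableAt ℝ θ x) :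
    covDeriv Ω (fun y ↦ Complex.exp (θ y * Complex.I)) x v =
      (fderiv ℝ θ x v - vecPot Ω x v) * Complex.I * Complex.exp (θ x * Complex.I) := by
  have hasFDerivAt_θ : HasFDerivAt (fun y ↦ (θ y : ℂ)) (Complex.ofRealCLM ∘L fderiv ℝ θ x) x :=
    Complex.ofRealCLM.hasFDerivAt.comp x hθ.hasFDerivAt
  unfold covDeriv
  rw [(hasFDerivAt_θ.mul_const Complex.I).cexp.fderiv]
  simp only [smul_apply, smul_eq_mul, ContinuousLinearMap.comp_apply,
    Complex.ofRealCLM_apply]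
  ring

end covDeriv

/-! ### Regularized phases -/

/-- The smooth substitute `z / √(‖z‖ ^ 2 + δ)` for `z / ‖z‖`. -/
def softNormalize {E : Type*} [NormedAddCommGroup E] [NormedSpace ℝ E] (δ : ℝ) (z : E) : E :=
  (√(‖z‖ ^ 2 + δ))⁻¹ • z

section softNormalize

variable {E : Type*} [NormedAddCommGroup E] [InnerProductSpace ℝ E] {δ : ℝ}

lemma contDiff_softNormalize (hδ : 0 < δ) {n : WithTop ℕ∞} :
    ContDiff ℝ n (softNormalize δ : E → E) := by
  have pos (z : E) : 0 < ‖z‖ ^ 2 + δ := by positivity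
  exact ((((contDiff_norm_sq ℝ).add contDiff_const).sqrt fun z ↦ (pos z).ne').inv
    fun z ↦ (sqrt_pos.2 (pos z)).ne').smul contDiff_id

lemma norm_softNormalize_sq (hδ : 0 < δ) (z : E) :
    ‖softNormalize δ z‖ ^ 2 = 1 - δ * (1 / (‖z‖ ^ 2 + δ)) := by
  have pos : 0 < ‖z‖ ^ 2 + δ := by positivity
  rw [softNormalize, norm_smul, mul_pow, norm_inv, inv_pow, norm_eq_abs, sq_abs, sq_sqrt pos.le]
  field_simp
  ring

lemma fderiv_softNormalize_apply (hδ : 0 < δ) (z w : E) :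
    fderiv ℝ (softNormalize δ) z w =
      (√(‖z‖ ^ 2 + δ))⁻¹ • (w - (inner ℝ z w / (‖z‖ ^ 2 + δ)) • z) := by
  have pos : 0 < ‖z‖ ^ 2 + δ := by positivity
  have hasFDerivAt_sqrt := ((hasStrictFDerivAt_norm_sq z).hasFDerivAt.add_const δ).sqrt pos.ne'
  have hasFDerivAt_factor : HasFDerivAt (fun y : E ↦ (√(‖y‖ ^ 2 + δ))⁻¹)
      (-((√(‖z‖ ^ 2 + δ))⁻¹ / (‖z‖ ^ 2 + δ)) • innerSL ℝ z) z := by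
    refine ((hasDerivAt_inv (sqrt_pos.2 pos).ne').comp_hasFDerivAt z
      hasFDerivAt_sqrt).congr_fderiv ?_
    rw [sq_sqrt pos.le, ← Nat.cast_smul_eq_nsmul ℝ, smul_smul, smul_smul]
    congr 1
    field_simp
    simp
  have hasFDerivAt_soft : HasFDerivAt (softNormalize δ) _ z :=
    hasFDerivAt_factor.smul (hasFDerivAt_id z)
  rw [hasFDerivAt_soft.fderiv]
  simp only [add_apply, smul_apply, ContinuousLinearMap.smulRight_apply, innerSL_apply_apply,
    ContinuousLinearMap.id_apply, smul_eq_mul]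
  module

lemma norm_fderiv_softNormalize_sq_le (hδ : 0 < δ) (z w : E) :
    ‖fderiv ℝ (softNormalize δ) z w‖ ^ 2 ≤ ‖w‖ ^ 2 / (‖z‖ ^ 2 + δ) := by
  have pos : 0 < ‖z‖ ^ 2 + δ := by positivity
  have projection_le : ‖w - (inner ℝ z w / (‖z‖ ^ 2 + δ)) • z‖ ^ 2 ≤ ‖w‖ ^ 2 := by
    rw [norm_sub_sq_real, inner_smul_right, real_inner_comm z w, norm_smul, mul_pow, norm_eq_abs,
      sq_abs]
    have : (inner ℝ z w / (‖z‖ ^ 2 + δ)) ^ 2 * ‖z‖ ^ 2 ≤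
        (inner ℝ z w / (‖z‖ ^ 2 + δ)) ^ 2 * (‖z‖ ^ 2 + δ) := by gcongr; linarith
    have cancel : (inner ℝ z w / (‖z‖ ^ 2 + δ)) ^ 2 * (‖z‖ ^ 2 + δ) =
        inner ℝ z w / (‖z‖ ^ 2 + δ) * inner ℝ z w := by field_simp
    have nonneg : 0 ≤ inner ℝ z w / (‖z‖ ^ 2 + δ) * inner ℝ z w :=
      cancel ▸ by positivity
    linarith
  rw [fderiv_softNormalize_apply hδ, norm_smul, mul_pow, norm_inv, inv_pow, norm_eq_abs, sq_abs,
    sq_sqrt pos.le, inv_mul_eq_div]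
  gcongr

end softNormalize

section covDeriv

variable (Ω : ℝ) {δ : ℝ} {F : Pt → ℂ} {x : Pt} (v : Pt)

-- The gauge term survives because `softNormalize` commutes with phases: its differential at `z`
-- maps the tangent `i z` of the phase orbit to `i softNormalize z`.
lemma covDeriv_softNormalize (hδ : 0 < δ) (hF : DifferentiableAt ℝ F x) :
    covDeriv Ω (fun y ↦ softNormalize δ (F y)) x v =
      fderiv ℝ (softNormalize δ) (F x) (covDeriv Ω F x v) := by
  have soft_diff : DifferentiableAt ℝ (softNormalize δ) (F x) :=
    (contDiff_softNormalize hδ (n := 1)).differentiable one_ne_zero _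
  have orbit_tangent : fderiv ℝ (softNormalize δ) (F x) (Complex.I * vecPot Ω x v * F x) =
      Complex.I * vecPot Ω x v * softNormalize δ (F x) := by
    have orthogonal : inner ℝ (F x) (Complex.I * vecPot Ω x v * F x) = 0 := by
      simp only [Complex.inner, Complex.mul_re, Complex.I_re, Complex.ofReal_re, zero_mul,
        Complex.I_im, Complex.ofReal_im, mul_zero, sub_self, Complex.mul_im, one_mul, zero_add,
        zero_sub, Complex.conj_re, neg_mul, Complex.conj_im, mul_neg, sub_neg_eq_add]
      ring
    rw [fderiv_softNormalize_apply hδ, orthogonal, zero_div, zero_smul, sub_zero, softNormalize,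
      mul_smul_comm]
  rw [covDeriv, covDeriv, map_sub, orbit_tangent, fderiv_fun_comp x soft_diff hF,
    ContinuousLinearMap.comp_apply]

lemma norm_covDeriv_ofReal_mul_softNormalize_sq_le (hδ : 0 < δ) (hF : DifferentiableAt ℝ F x)
    {g : Pt → ℝ} (hg : DifferentiableAt ℝ g x) :
    ‖covDeriv Ω (fun y ↦ (g y : ℂ) * softNormalize δ (F y)) x v‖ ^ 2 ≤
      2 * fderiv ℝ g x v ^ 2 + 2 * (g x ^ 2 * (‖covDeriv Ω F x v‖ ^ 2 / (‖F x‖ ^ 2 + δ))) := by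
  have soft_diff : DifferentiableAt ℝ (fun y ↦ softNormalize δ (F y)) x :=
    ((contDiff_softNormalize hδ (n := 1)).differentiable one_ne_zero _).comp x hF
  have soft_le : ‖softNormalize δ (F x)‖ ^ 2 ≤ 1 := by
    rw [norm_softNormalize_sq hδ]
    exact sub_le_self _ (by positivity)
  rw [covDeriv_ofReal_mul Ω v hg soft_diff, covDeriv_softNormalize Ω v hδ hF]
  calc _ ≤ (‖(fderiv ℝ g x v : ℂ) * softNormalize δ (F x)‖
          + ‖(g x : ℂ) * fderiv ℝ (softNormalize δ) (F x) (covDeriv Ω F x v)‖) ^ 2 := by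
        gcongr
        exact norm_add_le _ _
    _ ≤ 2 * (‖(fderiv ℝ g x v : ℂ) * softNormalize δ (F x)‖ ^ 2
          + ‖(g x : ℂ) * fderiv ℝ (softNormalize δ) (F x) (covDeriv Ω F x v)‖ ^ 2) := add_sq_le
    _ = 2 * (fderiv ℝ g x v ^ 2 * ‖softNormalize δ (F x)‖ ^ 2)
          + 2 * (g x ^ 2 * ‖fderiv ℝ (softNormalize δ) (F x) (covDeriv Ω F x v)‖ ^ 2) := by
        simp only [norm_mul, mul_pow, Complex.norm_real, norm_eq_abs, sq_abs]
        ring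
    _ ≤ _ := by
        gcongr
        · exact mul_le_of_le_one_right (sq_nonneg _) soft_le
        · exact norm_fderiv_softNormalize_sq_le hδ _ _

end covDeriv

/-! ### Smoothed positive part -/

/-- A smooth positive approximation, within `e`, of the positive part of `s`. -/
def smoothPos (e s : ℝ) : ℝ := (s + √(s ^ 2 + e ^ 2)) / 2

section smoothPos

variable {e : ℝ}

lemma smoothPos_pos (he : 0 < e) (s : ℝ) : 0 < smoothPos e s := by
  have : |s| < √(s ^ 2 + e ^ 2) :=
    lt_sqrt_of_sq_lt (by rw [sq_abs]; exact lt_add_of_pos_right _ (by positivity))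
  unfold smoothPos
  linarith [neg_abs_le s]

lemma abs_smoothPos_sub_max_le (he : 0 ≤ e) (s : ℝ) : |smoothPos e s - max 0 s| ≤ e := by
  have lower : |s| ≤ √(s ^ 2 + e ^ 2) := abs_le_sqrt (le_add_of_nonneg_right (sq_nonneg e))
  have upper : √(s ^ 2 + e ^ 2) ≤ |s| + e := by
    rw [sqrt_le_left (by positivity), add_sq, sq_abs]
    linarith [mul_nonneg (abs_nonneg s) he]
  have max_eq : max 0 s = (s + |s|) / 2 := by
    rcases le_total 0 s with hs | hs
    · rw [max_eq_right hs, abs_of_nonneg hs, add_self_div_two]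
    · rw [max_eq_left hs, abs_of_nonpos hs, add_neg_cancel, zero_div]
  rw [max_eq, smoothPos, abs_le]
  constructor <;> linarith

lemma hasDerivAt_sqrt_smoothPos (he : 0 < e) (s : ℝ) :
    HasDerivAt (fun t ↦ √(smoothPos e t)) (√(smoothPos e s) / (2 * √(s ^ 2 + e ^ 2))) s := by
  have pos : 0 < s ^ 2 + e ^ 2 := by positivity
  have hasDerivAt_sq : HasDerivAt (fun t : ℝ ↦ t ^ 2 + e ^ 2) (2 * s) s := by
    simpa using (hasDerivAt_pow 2 s).add_const (e ^ 2)
  have hasDerivAt_smoothPos :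
      HasDerivAt (smoothPos e) (smoothPos e s / √(s ^ 2 + e ^ 2)) s := by
    refine (((hasDerivAt_id s).add (hasDerivAt_sq.sqrt pos.ne')).div_const 2).congr_deriv ?_
    unfold smoothPos
    field_simp
    ring
  refine (hasDerivAt_smoothPos.sqrt (smoothPos_pos he s).ne').congr_deriv ?_
  rw [div_right_comm, mul_comm 2 (√(smoothPos e s)), ← div_div, div_sqrt, div_div]

lemma contDiff_sqrt_smoothPos (he : 0 < e) {n : WithTop ℕ∞} :
    ContDiff ℝ n fun s ↦ √(smoothPos e s) := by
  have contDiff_sqrt : ContDiff ℝ n fun s : ℝ ↦ √(s ^ 2 + e ^ 2) :=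
    ContDiff.sqrt (by fun_prop) fun s ↦ by positivity
  exact ((contDiff_id.add contDiff_sqrt).div_const 2).sqrt fun s ↦ (smoothPos_pos he s).ne'

lemma deriv_sqrt_smoothPos_sq_le (he : 0 < e) (s : ℝ) :
    deriv (fun t ↦ √(smoothPos e t)) s ^ 2 ≤ 1 / (4 * e) := by
  rw [(hasDerivAt_sqrt_smoothPos he s).deriv, div_pow, mul_pow, sq_sqrt (smoothPos_pos he s).le]
  have s_le : s ≤ √(s ^ 2 + e ^ 2) := le_sqrt_of_sq_le (le_add_of_nonneg_right (sq_nonneg e))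
  have e_le : e ≤ √(s ^ 2 + e ^ 2) := le_sqrt_of_sq_le (le_add_of_nonneg_left (sq_nonneg s))
  have smoothPos_le : smoothPos e s ≤ √(s ^ 2 + e ^ 2) := by unfold smoothPos; linarith
  have : smoothPos e s * e ≤ √(s ^ 2 + e ^ 2) * √(s ^ 2 + e ^ 2) := by gcongr
  rw [div_le_div_iff₀ (by positivity) (by positivity)]
  linarith

end smoothPos

/-! ### Landau strips -/

/-- A nonnegative `C¹` bump of height one with support `[-1, 1]`. -/
def bump (t : ℝ) : ℝ := max 0 (1 - t ^ 2) ^ 2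

lemma bump_nonneg (t : ℝ) : 0 ≤ bump t := sq_nonneg _

lemma max_zero_one_sub_sq_le_one (t : ℝ) : max 0 (1 - t ^ 2) ≤ 1 :=
  max_le zero_le_one (sub_le_self _ (sq_nonneg t))

lemma bump_le_one (t : ℝ) : bump t ≤ 1 :=
  pow_le_one₀ (le_max_left _ _) (max_zero_one_sub_sq_le_one t)

lemma max_zero_one_sub_sq_eq_zero {t : ℝ} (ht : 1 ≤ |t|) : max 0 (1 - t ^ 2) = 0 :=
  max_eq_left (sub_nonpos.2 ((one_le_sq_iff_one_le_abs t).2 ht))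

lemma bump_eq_zero {t : ℝ} (ht : 1 ≤ |t|) : bump t = 0 := by
  rw [bump, max_zero_one_sub_sq_eq_zero ht, zero_pow two_ne_zero]

lemma half_le_bump {t : ℝ} (ht : |t| ≤ 1 / 2) : 1 / 2 ≤ bump t := by
  have : t ^ 2 ≤ (1 / 2) ^ 2 := sq_le_sq' (abs_le.1 ht).1 (abs_le.1 ht).2
  have : 3 / 4 ≤ max 0 (1 - t ^ 2) := le_max_of_le_right (by linarith)
  calc (1 / 2 : ℝ) ≤ (3 / 4) ^ 2 := by norm_num
    _ ≤ bump t := by unfold bump; gcongr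

lemma hasDerivAt_bump (t : ℝ) : HasDerivAt bump (2 * max 0 (1 - t ^ 2) * (-(2 * t))) t := by
  have inner : HasDerivAt (fun t : ℝ ↦ 1 - t ^ 2) (-(2 * t)) t := by
    simpa using (hasDerivAt_pow 2 t).const_sub 1
  exact (hasDerivAt_max_zero_sq (1 - t ^ 2)).comp t inner

lemma contDiff_bump : ContDiff ℝ 1 bump := by
  rw [contDiff_one_iff_deriv, funext fun t ↦ (hasDerivAt_bump t).deriv]
  exact ⟨fun t ↦ (hasDerivAt_bump t).differentiableAt, by fun_prop⟩

lemma deriv_bump_eq_zero {t : ℝ} (ht : 1 ≤ |t|) : deriv bump t = 0 := by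
  rw [(hasDerivAt_bump t).deriv, max_zero_one_sub_sq_eq_zero ht, mul_zero, zero_mul]

lemma abs_deriv_bump_le (t : ℝ) : |deriv bump t| ≤ 4 := by
  rcases le_total 1 |t| with ht | ht
  · rw [deriv_bump_eq_zero ht, abs_zero]
    norm_num
  · rw [(hasDerivAt_bump t).deriv, abs_mul, abs_neg, abs_mul, abs_mul, abs_two,
      abs_of_nonneg (le_max_left 0 (1 - t ^ 2))]
    calc 2 * max 0 (1 - t ^ 2) * (2 * |t|) ≤ 2 * 1 * (2 * 1) := by
          gcongr
          exact max_zero_one_sub_sq_le_one t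
      _ = 4 := by norm_num

/-- A strip of width `2 l` centred at height `y`, carrying the phase that turns the potential
`vecPot Ω` into the Landau gauge `-Ω (x 1 - y) dx₀`, which vanishes on the centre line. -/
def landauStrip (Ω l y : ℝ) (x : Pt) : ℂ :=
  bump ((x 1 - y) / l) * Complex.exp ((Ω * x 0 * (x 1 / 2 - y) : ℝ) * Complex.I)

/-- The superposition of disjoint Landau strips at the heights `y + 2 l m`, `m ∈ s`. -/
def landauComb (Ω l y : ℝ) (s : Finset ℤ) (x : Pt) : ℂ :=
  ∑ m ∈ s, landauStrip Ω l (y + 2 * l * m) x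

section Landau

variable (Ω l y : ℝ)

lemma norm_landauStrip (x : Pt) : ‖landauStrip Ω l y x‖ = bump ((x 1 - y) / l) := by
  rw [landauStrip, norm_mul, Complex.norm_exp_ofReal_mul_I, mul_one, Complex.norm_real,
    norm_of_nonneg (bump_nonneg _)]

lemma contDiff_landauStrip : ContDiff ℝ 1 (landauStrip Ω l y) := by
  have contDiff_amplitude : ContDiff ℝ 1 fun x : Pt ↦ bump ((x 1 - y) / l) :=
    contDiff_bump.comp (by fun_prop)
  have contDiff_phase : ContDiff ℝ 1 fun x : Pt ↦ Ω * x 0 * (x 1 / 2 - y) := by fun_prop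
  exact (Complex.ofRealCLM.contDiff.comp contDiff_amplitude).mul
    ((Complex.ofRealCLM.contDiff.comp contDiff_phase).mul contDiff_const).cexp

lemma covDeriv_landauStrip (x v : Pt) :
    covDeriv Ω (landauStrip Ω l y) x v =
      (deriv bump ((x 1 - y) / l) * (v 1 / l) +
        bump ((x 1 - y) / l) * (Ω * (x 1 - y) * v 0) * Complex.I) *
      Complex.exp ((Ω * x 0 * (x 1 / 2 - y) : ℝ) * Complex.I) := by
  have hasFDerivAt_coord (i : Fin 2) :
      HasFDerivAt (fun x : Pt ↦ x i) (EuclideanSpace.proj (𝕜 := ℝ) i) x :=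
    (EuclideanSpace.proj (𝕜 := ℝ) i).hasFDerivAt
  have hasFDerivAt_phase : HasFDerivAt (fun x : Pt ↦ Ω * x 0 * (x 1 / 2 - y)) _ x :=
    ((hasFDerivAt_coord 0).const_mul Ω).fun_mul <| by
      simpa only [div_eq_mul_inv] using ((hasFDerivAt_coord 1).mul_const 2⁻¹).sub_const y
  have hasFDerivAt_amplitude : HasFDerivAt (fun x : Pt ↦ bump ((x 1 - y) / l)) _ x :=
    (hasDerivAt_bump _).comp_hasFDerivAt x <| by
      simpa only [div_eq_mul_inv] using ((hasFDerivAt_coord 1).sub_const y).mul_const l⁻¹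
  unfold landauStrip
  rw [covDeriv_ofReal_mul Ω v hasFDerivAt_amplitude.differentiableAt (by fun_prop),
    covDeriv_cexp_ofReal_mul_I Ω v hasFDerivAt_phase.differentiableAt,
    hasFDerivAt_amplitude.fderiv, hasFDerivAt_phase.fderiv, (hasDerivAt_bump _).deriv]
  simp only [Fin.isValue, mul_neg, neg_smul, neg_apply, smul_apply, PiLp.proj_apply, smul_eq_mul,
    Complex.ofReal_neg, Complex.ofReal_mul, Complex.ofReal_ofNat, Complex.ofReal_div,
    Complex.ofReal_sub, Complex.ofReal_inv, neg_mul, add_apply, Complex.ofReal_add, vecPot]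
  ring

lemma norm_covDeriv_landauStrip_le (hl : 0 < l) (x v : Pt) :
    ‖covDeriv Ω (landauStrip Ω l y) x v‖ ≤ (4 / l + |Ω| * l) * ‖v‖ := by
  rw [covDeriv_landauStrip, norm_mul, Complex.norm_exp_ofReal_mul_I, mul_one]
  have coord_le (i : Fin 2) : |v i| ≤ ‖v‖ := PiLp.norm_apply_le v i
  rcases le_total 1 |(x 1 - y) / l| with outside | inside
  · rw [deriv_bump_eq_zero outside, bump_eq_zero outside]
    simp only [Complex.ofReal_zero, zero_mul, add_zero, norm_zero]
    positivity
  rw [abs_div, abs_of_pos hl, div_le_one hl] at inside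
  calc _ ≤ ‖((deriv bump ((x 1 - y) / l) : ℝ) : ℂ) * (v 1 / l)‖
          + ‖(bump ((x 1 - y) / l) : ℂ) * (Ω * (x 1 - y) * v 0) * Complex.I‖ := norm_add_le _ _
    _ = |deriv bump ((x 1 - y) / l)| * (|v 1| / l)
          + bump ((x 1 - y) / l) * (|Ω| * |x 1 - y| * |v 0|) := by
        simp only [← Complex.ofReal_sub, norm_mul, norm_div, Complex.norm_real, Complex.norm_I,
          mul_one, norm_eq_abs, abs_of_pos hl, abs_of_nonneg (bump_nonneg _)]
    _ ≤ 4 * (‖v‖ / l) + 1 * (|Ω| * l * ‖v‖) := by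
        gcongr
        · exact abs_deriv_bump_le _
        · exact coord_le 1
        · exact bump_le_one _
        · exact coord_le 0
    _ = (4 / l + |Ω| * l) * ‖v‖ := by ring

end Landau

lemma norm_sum_le_norm_of_forall_ne {ι E : Type*} [SeminormedAddCommGroup E] (s : Finset ι)
    {f : ι → E} {i₀ : ι} (h : ∀ i ≠ i₀, f i = 0) : ‖∑ i ∈ s, f i‖ ≤ ‖f i₀‖ := by
  by_cases mem : i₀ ∈ s
  · rw [Finset.sum_eq_single_of_mem i₀ mem fun i _ hi ↦ h i hi]
  · rw [Finset.sum_eq_zero fun i hi ↦ h i (ne_of_mem_of_not_mem hi mem), norm_zero]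
    exact norm_nonneg _

lemma half_le_abs_sub_of_ne_round {s : ℝ} {m : ℤ} (h : m ≠ round s) : 1 / 2 ≤ |s - m| := by
  by_contra! close
  rw [abs_lt] at close
  exact h (round_eq_iff.2 ⟨by linarith, by linarith⟩).symm

lemma abs_sub_round_le_or_abs_sub_half_sub_round_le (s : ℝ) :
    |s - round s| ≤ 1 / 4 ∨ |s - 1 / 2 - round (s - 1 / 2)| ≤ 1 / 4 := by
  by_contra! h
  obtain ⟨far, far_shifted⟩ := h
  have le_left := round_le (s - 1 / 2) (round s)
  have le_right := round_le (s - 1 / 2) (round s - 1)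
  have close := abs_le.1 (abs_sub_round s)
  push_cast at le_right
  rcases lt_abs.1 far with h | h
  · exact (far_shifted.trans_le le_left).not_ge (abs_le.2 ⟨by linarith, by linarith⟩)
  · exact (far_shifted.trans_le le_right).not_ge (abs_le.2 ⟨by linarith, by linarith⟩)

section Landau

variable (Ω y : ℝ) {l : ℝ}

lemma landauStrip_coord_eq (hl : l ≠ 0) (x : Pt) (m : ℤ) :
    (x 1 - (y + 2 * l * m)) / l = 2 * ((x 1 - y) / (2 * l) - m) := by
  field_simp
  ring

lemma one_le_abs_landauStrip_coord (hl : l ≠ 0) (x : Pt) {m : ℤ}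
    (hm : m ≠ round ((x 1 - y) / (2 * l))) : 1 ≤ |(x 1 - (y + 2 * l * m)) / l| := by
  rw [landauStrip_coord_eq y hl, abs_mul, abs_two]
  linarith [half_le_abs_sub_of_ne_round hm]

lemma contDiff_landauComb (l : ℝ) (s : Finset ℤ) : ContDiff ℝ 1 (landauComb Ω l y s) :=
  ContDiff.sum fun _ _ ↦ contDiff_landauStrip Ω l _

lemma norm_covDeriv_landauComb_le (hl : 0 < l) (s : Finset ℤ) (x v : Pt) :
    ‖covDeriv Ω (landauComb Ω l y s) x v‖ ≤ (4 / l + |Ω| * l) * ‖v‖ := by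
  unfold landauComb
  rw [covDeriv_sum Ω v s fun m _ ↦ (contDiff_landauStrip Ω l _).differentiable one_ne_zero x]
  refine (norm_sum_le_norm_of_forall_ne s (i₀ := round ((x 1 - y) / (2 * l)))
    fun m hm ↦ ?_).trans (norm_covDeriv_landauStrip_le Ω l _ hl x v)
  have outside := one_le_abs_landauStrip_coord y hl.ne' x hm
  rw [covDeriv_landauStrip, deriv_bump_eq_zero outside, bump_eq_zero outside]
  simp only [Complex.ofReal_zero, zero_mul, add_zero]

lemma half_le_norm_landauComb (hl : l ≠ 0) {s : Finset ℤ} {x : Pt}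
    (mem : round ((x 1 - y) / (2 * l)) ∈ s)
    (close : |(x 1 - y) / (2 * l) - round ((x 1 - y) / (2 * l))| ≤ 1 / 4) :
    1 / 2 ≤ ‖landauComb Ω l y s x‖ := by
  have others (m : ℤ) (hm : m ≠ round ((x 1 - y) / (2 * l))) :
      landauStrip Ω l (y + 2 * l * m) x = 0 := by
    rw [← norm_eq_zero, norm_landauStrip, bump_eq_zero (one_le_abs_landauStrip_coord y hl x hm)]
  rw [landauComb, Finset.sum_eq_single_of_mem _ mem fun m _ hm ↦ others m hm, norm_landauStrip,
    landauStrip_coord_eq y hl]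
  refine half_le_bump ?_
  rw [abs_mul, abs_two]
  linarith

lemma exists_finset_half_le_norm_landauComb (hl : 0 < l) (R : ℝ) :
    ∃ s : Finset ℤ, ∀ x : Pt, |x 1| ≤ R →
      1 / 2 ≤ ‖landauComb Ω l 0 s x‖ ∨ 1 / 2 ≤ ‖landauComb Ω l l s x‖ := by
  set N : ℤ := ⌈R / (2 * l)⌉ + 1
  have mem_Icc {t : ℝ} (ht : |t| ≤ R / (2 * l) + 1 / 2) : round t ∈ Finset.Icc (-N) N := by
    have ht := abs_le.1 ht
    have close := abs_le.1 (abs_sub_round t)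
    have := Int.le_ceil (R / (2 * l))
    rw [Finset.mem_Icc]
    constructor <;> rify <;> push_cast [N] <;> linarith
  refine ⟨Finset.Icc (-N) N, fun x hx ↦ ?_⟩
  have abs_le_div : |x 1 / (2 * l)| ≤ R / (2 * l) := by
    rw [abs_div, abs_of_pos (a := 2 * l) (by positivity)]
    gcongr
  have unshifted : (x 1 - 0) / (2 * l) = x 1 / (2 * l) := by rw [sub_zero]
  have shifted : (x 1 - l) / (2 * l) = x 1 / (2 * l) - 1 / 2 := by field_simp
  refine (abs_sub_round_le_or_abs_sub_half_sub_round_le (x 1 / (2 * l))).imp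
    (fun h ↦ half_le_norm_landauComb Ω 0 hl.ne' ?_ ?_)
    (fun h ↦ half_le_norm_landauComb Ω l hl.ne' ?_ ?_)
  · exact mem_Icc (by rw [unshifted]; linarith)
  · rwa [unshifted]
  · exact mem_Icc (by
      rw [shifted]
      linarith [abs_sub (x 1 / (2 * l)) (1 / 2), abs_of_pos (one_half_pos (α := ℝ))])
  · rwa [shifted]

end Landau

/-! ### Averaging over the phases -/

section Averaging

variable {δ : ℝ}

lemma integral_ball_one_div_norm_sq_add (hδ : 0 < δ) :
    ∫ w in Metric.ball (0 : ℂ) 1, 1 / (‖w‖ ^ 2 + δ) = π * log (1 + 1 / δ) := by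
  have pos (r : ℝ) : 0 < r ^ 2 + δ := by positivity
  have primitive (r : ℝ) :
      HasDerivAt (fun r ↦ log (r ^ 2 + δ) / 2) (r * (1 / (r ^ 2 + δ))) r := by
    have inner : HasDerivAt (fun r : ℝ ↦ r ^ 2 + δ) (2 * r) r := by
      simpa using (hasDerivAt_pow 2 r).add_const δ
    refine ((inner.log (pos r).ne').div_const 2).congr_deriv ?_
    field_simp
  have integrable : IntervalIntegrable (fun r ↦ r * (1 / (r ^ 2 + δ))) volume 0 1 :=
    (continuous_id.mul (continuous_const.div (by fun_prop) fun r ↦ (pos r).ne')).intervalIntegrable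
      _ _
  have volume_ball : (volume : Measure ℂ).real (Metric.ball 0 1) = π := by simp [Measure.real]
  rw [setIntegral_ball_fun_norm_addHaar volume (fun r ↦ 1 / (r ^ 2 + δ)) zero_le_one, volume_ball]
  simp only [Complex.finrank_real_complex, Nat.add_one_sub_one, pow_one, smul_eq_mul, nsmul_eq_mul]
  rw [intervalIntegral.integral_eq_sub_of_hasDerivAt (fun r _ ↦ primitive r) integrable,
    one_add_div hδ.ne', log_div (by positivity) hδ.ne', add_comm δ]
  simp only [Nat.cast_ofNat, one_pow, ne_eq, OfNat.ofNat_ne_zero, not_false_eq_true, zero_pow,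
    zero_add]
  ring

lemma continuous_one_div_norm_sq_add {X E : Type*} [TopologicalSpace X] [SeminormedAddCommGroup E]
    {f : X → E} (hf : Continuous f) (hδ : 0 < δ) : Continuous fun x ↦ 1 / (‖f x‖ ^ 2 + δ) :=
  continuous_const.div (by fun_prop) fun x ↦ by positivity

lemma integral_ball_one_div_norm_add_sq_add_le (hδ : 0 < δ) (c : ℂ) :
    ∫ w in Metric.ball (0 : ℂ) 1, 1 / (‖w + c‖ ^ 2 + δ) ≤ π * (1 + log (1 + 1 / δ)) := by
  set k : ℂ → ℝ := (Metric.ball 0 1).indicator fun w ↦ 1 / (‖w‖ ^ 2 + δ)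
  have k_nonneg (w : ℂ) : 0 ≤ k w := Set.indicator_nonneg (fun w _ ↦ by positivity) w
  have pointwise (w : ℂ) : 1 / (‖w + c‖ ^ 2 + δ) ≤ 1 + k (w + c) := by
    by_cases near : ‖w + c‖ < 1
    · have k_eq : k (w + c) = 1 / (‖w + c‖ ^ 2 + δ) := Set.indicator_of_mem (by simpa) _
      rw [k_eq]
      exact le_add_of_nonneg_left zero_le_one
    · refine (div_le_one_of_le₀ ?_ (by positivity)).trans (le_add_of_nonneg_right (k_nonneg _))
      exact (one_le_pow₀ (not_lt.1 near)).trans (le_add_of_nonneg_right hδ.le)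
  have k_integrable : Integrable k :=
    (integrableOn_ball_of_continuous (continuous_one_div_norm_sq_add continuous_id hδ) 0 1
      ).integrable_indicator Metric.isOpen_ball.measurableSet
  have k_shift_integrable : Integrable fun w ↦ k (w + c) := k_integrable.comp_add_right c
  calc _ ≤ ∫ w in Metric.ball (0 : ℂ) 1, (1 + k (w + c)) :=
        integral_mono_of_nonneg (.of_forall fun w ↦ by positivity)
          ((integrable_const 1).add k_shift_integrable.integrableOn) (.of_forall pointwise)
    _ = π + ∫ w in Metric.ball (0 : ℂ) 1, k (w + c) := by
        rw [integral_add (integrable_const 1) k_shift_integrable.integrableOn]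
        simp [Measure.real]
    _ ≤ π + ∫ w, k (w + c) := add_le_add_right
        (setIntegral_le_integral k_shift_integrable (.of_forall fun w ↦ k_nonneg _)) π
    _ = π * (1 + log (1 + 1 / δ)) := by
        rw [integral_add_right_eq_self k, integral_indicator Metric.isOpen_ball.measurableSet,
          integral_ball_one_div_norm_sq_add hδ, mul_add, mul_one]

section Pencil

variable {a : ℝ} {z u w : ℂ}

lemma one_div_norm_add_mul_sq_add_le_of_le_right (hδ : 0 < δ) (ha : 0 < a) (ha1 : a ≤ 1)
    (hu : a ≤ ‖u‖) :
    1 / (‖z + w * u‖ ^ 2 + δ) ≤ 1 / a ^ 2 * (1 / (‖w + z / u‖ ^ 2 + δ)) := by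
  have u_ne : u ≠ 0 := norm_pos_iff.1 (ha.trans_le hu)
  have factor : z + w * u = u * (w + z / u) := by field_simp; ring
  have lower : a ^ 2 * (‖w + z / u‖ ^ 2 + δ) ≤ ‖z + w * u‖ ^ 2 + δ := by
    rw [factor, norm_mul, mul_pow, mul_add]
    gcongr
    exact mul_le_of_le_one_left hδ.le (pow_le_one₀ ha.le ha1)
  refine (one_div_le_one_div_of_le (by positivity) lower).trans_eq ?_
  rw [one_div_mul_one_div]

lemma one_div_norm_add_mul_sq_add_le_of_le_left (hδ : 0 ≤ δ) (ha : 0 < a) (hz : 2 * a ≤ ‖z‖)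
    (hu : ‖u‖ ≤ a) (hw : ‖w‖ ≤ 1) : 1 / (‖z + w * u‖ ^ 2 + δ) ≤ 1 / a ^ 2 := by
  have wu_le : ‖w * u‖ ≤ a := by
    rw [norm_mul]
    exact (mul_le_of_le_one_left (norm_nonneg u) hw).trans hu
  have lower : a ≤ ‖z + w * u‖ := by linarith [norm_sub_le_norm_add z (w * u)]
  exact one_div_le_one_div_of_le (by positivity) (le_add_of_le_of_nonneg (by gcongr) hδ)

lemma integral_ball_one_div_norm_add_mul_sq_add_le (hδ : 0 < δ) (ha : 0 < a) (ha1 : a ≤ 1)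
    (h : 2 * a ≤ ‖z‖ ∨ 2 * a ≤ ‖u‖) :
    ∫ w in Metric.ball (0 : ℂ) 1, 1 / (‖z + w * u‖ ^ 2 + δ) ≤
      π * (1 / a ^ 2 * (1 + log (1 + 1 / δ))) := by
  rcases le_total a ‖u‖ with hu | hu
  · have integrable : IntegrableOn (fun w ↦ 1 / a ^ 2 * (1 / (‖w + z / u‖ ^ 2 + δ)))
        (Metric.ball 0 1) :=
      integrableOn_ball_of_continuous
        (continuous_const.mul (continuous_one_div_norm_sq_add (by fun_prop) hδ)) 0 1
    calc _ ≤ ∫ w in Metric.ball (0 : ℂ) 1, 1 / a ^ 2 * (1 / (‖w + z / u‖ ^ 2 + δ)) :=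
          integral_mono_of_nonneg (.of_forall fun w ↦ by positivity) integrable
            (.of_forall fun w ↦ one_div_norm_add_mul_sq_add_le_of_le_right hδ ha ha1 hu)
      _ ≤ 1 / a ^ 2 * (π * (1 + log (1 + 1 / δ))) := by
          rw [integral_const_mul]
          gcongr
          exact integral_ball_one_div_norm_add_sq_add_le hδ _
      _ = _ := by ring
  · have hz : 2 * a ≤ ‖z‖ := h.elim id fun h ↦ by linarith
    have log_nonneg : 0 ≤ log (1 + 1 / δ) :=
      log_nonneg (le_add_of_nonneg_right (by positivity))
    calc _ ≤ ∫ w in Metric.ball (0 : ℂ) 1, 1 / a ^ 2 :=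
          integral_mono_of_nonneg (.of_forall fun w ↦ by positivity)
            (integrable_const _)
            (ae_restrict_of_forall_mem Metric.isOpen_ball.measurableSet fun w hw ↦
              one_div_norm_add_mul_sq_add_le_of_le_left hδ.le ha hz hu
                (mem_ball_zero_iff.1 hw).le)
      _ = π * (1 / a ^ 2 * 1) := by simp [Measure.real]
      _ ≤ _ := by
          gcongr
          linarith

end Pencil

lemma exists_mem_integral_le_of_setIntegral_le {α β : Type*} [MeasurableSpace α]
    [MeasurableSpace β] {μ : Measure α} [SFinite μ] {ν : Measure β} [IsFiniteMeasure ν] {s : Set α}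
    {f : α → β → ℝ} {C : ℝ} (hs : μ s ≠ 0) (hs_top : μ s ≠ ⊤)
    (hf : Integrable (Function.uncurry f) ((μ.restrict s).prod ν))
    (hC : ∀ᵐ y ∂ν, ∫ x in s, f x y ∂μ ≤ μ.real s * C) :
    ∃ x ∈ s, ∫ y, f x y ∂ν ≤ ν.real Set.univ * C := by
  obtain ⟨x, hx, le_average⟩ := exists_le_setAverage hs hs_top hf.integral_prod_left
  refine ⟨x, hx, le_average.trans ?_⟩
  have pos : 0 < μ.real s := ENNReal.toReal_pos hs hs_top
  rw [setAverage_eq, smul_eq_mul, inv_mul_le_iff₀ pos]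
  calc _ = ∫ y, ∫ x in s, f x y ∂μ ∂ν := integral_integral_swap hf
    _ ≤ ∫ _, μ.real s * C ∂ν := integral_mono_ae hf.integral_prod_right (integrable_const _) hC
    _ = μ.real s * (ν.real Set.univ * C) := by
        rw [integral_const, smul_eq_mul]
        ring

lemma exists_mem_ball_integral_one_div_norm_add_mul_sq_add_le {X : Type*} [TopologicalSpace X]
    [SecondCountableTopology X] [MeasurableSpace X] [OpensMeasurableSpace X] {μ : Measure X}
    [IsFiniteMeasure μ] (hδ : 0 < δ) {a : ℝ} (ha : 0 < a) (ha1 : a ≤ 1) {A B : X → ℂ}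
    (hA : Continuous A) (hB : Continuous B) (h : ∀ᵐ x ∂μ, 2 * a ≤ ‖A x‖ ∨ 2 * a ≤ ‖B x‖) :
    ∃ w ∈ Metric.ball (0 : ℂ) 1, ∫ x, 1 / (‖A x + w * B x‖ ^ 2 + δ) ∂μ ≤
      μ.real Set.univ * (1 / a ^ 2 * (1 + log (1 + 1 / δ))) := by
  have integrable : Integrable (fun p : ℂ × X ↦ 1 / (‖A p.2 + p.1 * B p.2‖ ^ 2 + δ))
      ((volume.restrict (Metric.ball 0 1)).prod μ) := by
    refine Integrable.of_bound
      (continuous_one_div_norm_sq_add (by fun_prop) hδ).aestronglyMeasurable (1 / δ)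
      (.of_forall fun p ↦ ?_)
    rw [norm_of_nonneg (by positivity)]
    exact one_div_le_one_div_of_le hδ (le_add_of_nonneg_left (by positivity))
  have volume_ball : (volume : Measure ℂ).real (Metric.ball 0 1) = π := by simp [Measure.real]
  refine exists_mem_integral_le_of_setIntegral_le (Metric.measure_ball_pos _ _ one_pos).ne'
    measure_ball_lt_top.ne integrable ?_
  filter_upwards [h] with x hx
  rw [volume_ball]
  exact integral_ball_one_div_norm_add_mul_sq_add_le hδ ha ha1 hx

end Averaging

-- Neither comb alone is bounded below, but at each point one of them is; averaging over the
-- combinations `A + w B` then costs only the logarithm coming from `∫ 1 / (‖w‖ ^ 2 + δ)`.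
lemma exists_norm_covDeriv_le_integral_one_div_le {Ω δ : ℝ} (hΩ : 0 < Ω) (hδ : 0 < δ) :
    ∃ F : Pt → ℂ, ContDiff ℝ 1 F ∧ (∀ x v, ‖covDeriv Ω F x v‖ ≤ 10 * √Ω * ‖v‖) ∧
      ∫ x in B1, 1 / (‖F x‖ ^ 2 + δ) ≤ π * (16 * (1 + log (1 + 1 / δ))) := by
  set l := (√Ω)⁻¹ with l_def
  have hl : 0 < l := by positivity
  have slope : 4 / l + |Ω| * l = 5 * √Ω := by
    rw [l_def, abs_of_pos hΩ, div_inv_eq_mul, ← div_eq_mul_inv, div_sqrt]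
    ring
  obtain ⟨s, alternative⟩ := exists_finset_half_le_norm_landauComb Ω hl 1
  set A := landauComb Ω l 0 s
  set B := landauComb Ω l l s
  have contDiff_A : ContDiff ℝ 1 A := contDiff_landauComb Ω 0 l s
  have contDiff_B : ContDiff ℝ 1 B := contDiff_landauComb Ω l l s
  have alternative_B1 : ∀ x ∈ B1, 2 * (1 / 4) ≤ ‖A x‖ ∨ 2 * (1 / 4) ≤ ‖B x‖ := fun x hx ↦ by
    norm_num only
    exact alternative x ((PiLp.norm_apply_le x 1).trans (mem_B1.1 hx).le)
  obtain ⟨w, hw, integral_le⟩ := exists_mem_ball_integral_one_div_norm_add_mul_sq_add_le hδ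
    (by norm_num) (by norm_num) contDiff_A.continuous contDiff_B.continuous
    (ae_B1_of_forall alternative_B1)
  refine ⟨fun x ↦ A x + w * B x, contDiff_A.add (contDiff_const.mul contDiff_B), fun x v ↦ ?_, ?_⟩
  · have diff_A : DifferentiableAt ℝ A x := contDiff_A.differentiable one_ne_zero x
    have diff_B : DifferentiableAt ℝ B x := contDiff_B.differentiable one_ne_zero x
    calc _ ≤ ‖covDeriv Ω A x v‖ + ‖w‖ * ‖covDeriv Ω B x v‖ :=
          norm_covDeriv_add_const_mul_le Ω v diff_A diff_B w
      _ ≤ 5 * √Ω * ‖v‖ + 1 * (5 * √Ω * ‖v‖) := by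
          rw [← slope]
          gcongr
          · exact norm_covDeriv_landauComb_le Ω _ hl s x v
          · exact (mem_ball_zero_iff.1 hw).le
          · exact norm_covDeriv_landauComb_le Ω _ hl s x v
      _ = 10 * √Ω * ‖v‖ := by ring
  · rw [measureReal_restrict_apply_univ, volume_real_B1] at integral_le
    exact integral_le.trans_eq (by norm_num)

/-! ### The trial state -/

/-- The trial function with modulus a regularization of the square root of the Thomas-Fermi
minimizer and with the phase of `F`; both are smoothed at scale `ε`. -/
def trialState (Ω₀ ε : ℝ) (F : Pt → ℂ) (x : Pt) : ℂ :=
  (√(smoothPos ε (tfProfile Ω₀ x)) : ℝ) * softNormalize ε (F x)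

section trialState

variable {ε : ℝ} {F : Pt → ℂ} {x : Pt}

lemma contDiff_sqrt_smoothPos_tfProfile (Ω₀ : ℝ) (hε : 0 < ε) {n : WithTop ℕ∞} :
    ContDiff ℝ n fun x ↦ √(smoothPos ε (tfProfile Ω₀ x)) :=
  (contDiff_sqrt_smoothPos hε).comp (contDiff_tfProfile Ω₀)

lemma contDiff_trialState (Ω₀ : ℝ) (hε : 0 < ε) (hF : ContDiff ℝ 1 F) :
    ContDiff ℝ 1 (trialState Ω₀ ε F) :=
  (Complex.ofRealCLM.contDiff.comp (contDiff_sqrt_smoothPos_tfProfile Ω₀ hε)).mul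
    ((contDiff_softNormalize hε).comp hF)

lemma smoothPos_tfProfile_le (Ω₀ : ℝ) (hε : 0 ≤ ε) (hε1 : ε ≤ 1) (hx : x ∈ B1) :
    smoothPos ε (tfProfile Ω₀ x) ≤ tfBound Ω₀ + 1 := by
  linarith [(abs_le.1 (abs_smoothPos_sub_max_le hε (tfProfile Ω₀ x))).2,
    max_zero_tfProfile_le Ω₀ hx]

lemma norm_trialState_sq (Ω₀ : ℝ) (hε : 0 < ε) (F : Pt → ℂ) (x : Pt) :
    ‖trialState Ω₀ ε F x‖ ^ 2 =
      smoothPos ε (tfProfile Ω₀ x) * (1 - ε * (1 / (‖F x‖ ^ 2 + ε))) := by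
  rw [trialState, norm_mul, mul_pow, Complex.norm_real, norm_eq_abs, sq_abs,
    sq_sqrt (smoothPos_pos hε _).le, norm_softNormalize_sq hε]

lemma norm_trialState_sq_le (Ω₀ : ℝ) (hε : 0 < ε) (hε1 : ε ≤ 1) (F : Pt → ℂ) (hx : x ∈ B1) :
    ‖trialState Ω₀ ε F x‖ ^ 2 ≤ tfBound Ω₀ + 1 := by
  rw [norm_trialState_sq Ω₀ hε]
  refine (mul_le_of_le_one_right (smoothPos_pos hε _).le ?_).trans
    (smoothPos_tfProfile_le Ω₀ hε.le hε1 hx)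
  exact sub_le_self _ (by positivity)

lemma abs_norm_trialState_sq_sub_rhoTF_le {Ω₀ : ℝ} (hΩ : 0 < Ω₀) (hε : 0 < ε) (hε1 : ε ≤ 1)
    (F : Pt → ℂ) (hx : x ∈ B1) :
    |‖trialState Ω₀ ε F x‖ ^ 2 - rhoTF Ω₀ x| ≤
      ε + (tfBound Ω₀ + 1) * (ε * (1 / (‖F x‖ ^ 2 + ε))) := by
  have pos := smoothPos_pos hε (tfProfile Ω₀ x)
  have deficit_nonneg : 0 ≤ ε * (1 / (‖F x‖ ^ 2 + ε)) := by positivity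
  rw [norm_trialState_sq Ω₀ hε, rhoTF_eq_max hΩ, mul_one_sub, sub_right_comm]
  refine (abs_sub _ _).trans (add_le_add (abs_smoothPos_sub_max_le hε.le _) ?_)
  rw [abs_of_nonneg (mul_nonneg pos.le deficit_nonneg)]
  exact mul_le_mul_of_nonneg_right (smoothPos_tfProfile_le Ω₀ hε.le hε1 hx) deficit_nonneg

lemma fderiv_sqrt_smoothPos_tfProfile_sq_le (Ω₀ : ℝ) (hε : 0 < ε) (hx : x ∈ B1) (v : Pt) :
    fderiv ℝ (fun y ↦ √(smoothPos ε (tfProfile Ω₀ y))) x v ^ 2 ≤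
      Ω₀ ^ 4 / (64 * ε) * ‖v‖ ^ 2 := by
  have hasFDerivAt_tfProfile : HasFDerivAt (tfProfile Ω₀)
      ((Ω₀ ^ 2 / 8) • (2 • innerSL ℝ x)) x :=
    ((hasStrictFDerivAt_norm_sq x).hasFDerivAt.const_mul _).add_const _
  have inner_sq_le : inner ℝ x v ^ 2 ≤ ‖v‖ ^ 2 := by
    refine sq_le_sq.2 ((abs_real_inner_le_norm x v).trans ?_)
    rw [abs_norm]
    exact mul_le_of_le_one_left (norm_nonneg v) (mem_B1.1 hx).le
  have hasDerivAt_sqrt :=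
    (hasDerivAt_sqrt_smoothPos hε (tfProfile Ω₀ x)).differentiableAt.hasDerivAt
  have hasFDerivAt_modulus : HasFDerivAt (fun y ↦ √(smoothPos ε (tfProfile Ω₀ y))) _ x :=
    hasDerivAt_sqrt.comp_hasFDerivAt x hasFDerivAt_tfProfile
  rw [hasFDerivAt_modulus.fderiv]
  simp only [smul_apply, innerSL_apply_apply, smul_eq_mul, nsmul_eq_mul, Nat.cast_ofNat]
  calc _ = deriv (fun t ↦ √(smoothPos ε t)) (tfProfile Ω₀ x) ^ 2 *
          (Ω₀ ^ 4 / 16 * inner ℝ x v ^ 2) := by ring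
    _ ≤ 1 / (4 * ε) * (Ω₀ ^ 4 / 16 * ‖v‖ ^ 2) := by
        gcongr
        exact deriv_sqrt_smoothPos_sq_le hε _
    _ = _ := by ring

lemma covGradSq_trialState_le (Ω₀ : ℝ) (hε : 0 < ε) (hε1 : ε ≤ 1) {Ω κ : ℝ} (hx : x ∈ B1)
    (hF : DifferentiableAt ℝ F x) (hκ : ∀ v, ‖covDeriv Ω F x v‖ ≤ κ * ‖v‖) :
    covGradSq Ω (trialState Ω₀ ε F) x ≤
      Ω₀ ^ 4 / (16 * ε) + 4 * (tfBound Ω₀ + 1) * κ ^ 2 * (1 / (‖F x‖ ^ 2 + ε)) := by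
  have direction (v : Pt) (hv : ‖v‖ = 1) : ‖covDeriv Ω (trialState Ω₀ ε F) x v‖ ^ 2 ≤
      2 * (Ω₀ ^ 4 / (64 * ε)) + 2 * ((tfBound Ω₀ + 1) * (κ ^ 2 / (‖F x‖ ^ 2 + ε))) := by
    have modulus_diff : DifferentiableAt ℝ (fun y ↦ √(smoothPos ε (tfProfile Ω₀ y))) x :=
      (contDiff_sqrt_smoothPos_tfProfile Ω₀ hε (n := 1)).differentiable one_ne_zero x
    refine (norm_covDeriv_ofReal_mul_softNormalize_sq_le Ω v hε hF modulus_diff).trans ?_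
    rw [sq_sqrt (smoothPos_pos hε _).le]
    gcongr
    · simpa only [hv, one_pow, mul_one] using fderiv_sqrt_smoothPos_tfProfile_sq_le Ω₀ hε hx v
    · exact add_nonneg (tfBound_nonneg Ω₀) zero_le_one
    · exact smoothPos_tfProfile_le Ω₀ hε.le hε1 hx
    · simpa only [hv, mul_one] using hκ v
  refine (add_le_add (direction _ (by simp)) (direction _ (by simp))).trans_eq ?_
  field_simp
  ring

lemma integral_abs_norm_trialState_sq_sub_rhoTF_le {Ω₀ : ℝ} (hΩ : 0 < Ω₀) (hε : 0 < ε)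
    (hε1 : ε ≤ 1) (hF : Continuous F) :
    ∫ x in B1, |‖trialState Ω₀ ε F x‖ ^ 2 - rhoTF Ω₀ x| ≤
      ε * (π + (tfBound Ω₀ + 1) * ∫ x in B1, 1 / (‖F x‖ ^ 2 + ε)) := by
  have int_vortex : IntegrableOn (fun x ↦ (tfBound Ω₀ + 1) * (ε * (1 / (‖F x‖ ^ 2 + ε)))) B1 :=
    ((integrableOn_B1_of_continuous (continuous_one_div_norm_sq_add hF hε)).const_mul _).const_mul _
  calc _ ≤ ∫ x in B1, (ε + (tfBound Ω₀ + 1) * (ε * (1 / (‖F x‖ ^ 2 + ε)))) :=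
        integral_mono_of_nonneg (.of_forall fun x ↦ abs_nonneg _)
          ((integrable_const ε).add int_vortex)
          (ae_B1_of_forall fun x hx ↦ abs_norm_trialState_sq_sub_rhoTF_le hΩ hε hε1 F hx)
    _ = _ := by
        rw [integral_add (integrable_const ε) int_vortex, setIntegral_B1_const, integral_const_mul,
          integral_const_mul]
        ring

lemma integral_covGradSq_trialState_le (Ω₀ : ℝ) (hε : 0 < ε) (hε1 : ε ≤ 1) {Ω κ : ℝ}
    (hF : Differentiable ℝ F) (hκ : ∀ x v, ‖covDeriv Ω F x v‖ ≤ κ * ‖v‖) :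
    ∫ x in B1, covGradSq Ω (trialState Ω₀ ε F) x ≤ Ω₀ ^ 4 / (16 * ε) * π +
      4 * (tfBound Ω₀ + 1) * κ ^ 2 * ∫ x in B1, 1 / (‖F x‖ ^ 2 + ε) := by
  have int_vortex :
      IntegrableOn (fun x ↦ 4 * (tfBound Ω₀ + 1) * κ ^ 2 * (1 / (‖F x‖ ^ 2 + ε))) B1 :=
    (integrableOn_B1_of_continuous (continuous_one_div_norm_sq_add hF.continuous hε)).const_mul _
  calc _ ≤ ∫ x in B1,
          (Ω₀ ^ 4 / (16 * ε) + 4 * (tfBound Ω₀ + 1) * κ ^ 2 * (1 / (‖F x‖ ^ 2 + ε))) :=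
        integral_mono_of_nonneg (.of_forall fun x ↦ covGradSq_nonneg _ _ x)
          ((integrable_const _).add int_vortex)
          (ae_B1_of_forall fun x hx ↦
            covGradSq_trialState_le Ω₀ hε hε1 hx (hF x) (hκ x))
    _ = _ := by
        rw [integral_add (integrable_const _) int_vortex, setIntegral_B1_const,
          integral_const_mul]

end trialState

lemma one_le_abs_log {ε : ℝ} (hε : 0 < ε) (h : ε ≤ exp (-1)) : 1 ≤ |log ε| :=
  le_abs.2 (.inr (le_neg.2 ((log_le_iff_le_exp hε).2 h)))

lemma one_add_log_one_add_one_div_le {ε : ℝ} (hε : 0 < ε) (h : ε ≤ exp (-1)) :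
    1 + log (1 + 1 / ε) ≤ 3 * |log ε| := by
  have le_half : ε ≤ 1 / 2 := h.trans (by
    rw [exp_neg, one_div]
    exact inv_anti₀ two_pos exp_one_gt_two.le)
  have le_inv_sq : 1 + 1 / ε ≤ (ε ^ 2)⁻¹ := by
    rw [← one_div, le_div_iff₀ (by positivity)]
    field_simp
    nlinarith
  have log_le : log (1 + 1 / ε) ≤ -(2 * log ε) := by
    simpa using log_le_log (by positivity) le_inv_sq
  linarith [one_le_abs_log hε h, neg_le_abs (log ε)]

lemma exists_trialState_bounds {Ω₀ : ℝ} (hΩ : 0 < Ω₀) :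
    ∃ C, ∀ ε : ℝ, 0 < ε → ε ≤ exp (-1) → ∃ F : Pt → ℂ, ContDiff ℝ 1 F ∧
      ∫ x in B1, |‖trialState Ω₀ ε F x‖ ^ 2 - rhoTF Ω₀ x| ≤ C * (ε * |log ε|) ∧
      ε ^ 2 * ∫ x in B1, covGradSq (Ω₀ / ε) (trialState Ω₀ ε F) x ≤ C * (ε * |log ε|) := by
  set b := tfBound Ω₀ + 1
  have b_pos : 0 < b := add_pos_of_nonneg_of_pos (tfBound_nonneg Ω₀) one_pos
  refine ⟨π * (1 + 48 * b) + π * (Ω₀ ^ 4 / 16 + 19200 * b * Ω₀), fun ε hε hε_le ↦ ?_⟩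
  have hε1 : ε ≤ 1 := hε_le.trans (exp_le_one_iff.2 (by norm_num))
  obtain ⟨F, contDiff_F, hκ, integral_le⟩ :=
    exists_norm_covDeriv_le_integral_one_div_le (div_pos hΩ hε) hε
  have vortex_le : ∫ x in B1, 1 / (‖F x‖ ^ 2 + ε) ≤ π * (16 * (3 * |log ε|)) :=
    integral_le.trans (by gcongr; exact one_add_log_one_add_one_div_le hε hε_le)
  have pi_le : π ≤ π * |log ε| := le_mul_of_one_le_right pi_pos.le (one_le_abs_log hε hε_le)
  refine ⟨F, contDiff_F, ?_, ?_⟩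
  · calc _ ≤ ε * (π + b * ∫ x in B1, 1 / (‖F x‖ ^ 2 + ε)) :=
          integral_abs_norm_trialState_sq_sub_rhoTF_le hΩ hε hε1 contDiff_F.continuous
      _ ≤ ε * (π * |log ε| + b * (π * (16 * (3 * |log ε|)))) := by gcongr
      _ = π * (1 + 48 * b) * (ε * |log ε|) := by ring
      _ ≤ _ := by
          gcongr
          exact le_add_of_nonneg_right (by positivity)
  · calc _ ≤ ε ^ 2 * (Ω₀ ^ 4 / (16 * ε) * π +
            4 * b * (10 * √(Ω₀ / ε)) ^ 2 * ∫ x in B1, 1 / (‖F x‖ ^ 2 + ε)) := by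
          gcongr
          exact integral_covGradSq_trialState_le Ω₀ hε hε1
            (contDiff_F.differentiable one_ne_zero) hκ
      _ ≤ ε ^ 2 * (Ω₀ ^ 4 / (16 * ε) * (π * |log ε|) +
            4 * b * (10 * √(Ω₀ / ε)) ^ 2 * (π * (16 * (3 * |log ε|)))) := by gcongr
      _ = π * (Ω₀ ^ 4 / 16 + 19200 * b * Ω₀) * (ε * |log ε|) := by
          rw [mul_pow, sq_sqrt (by positivity)]
          field_simp
          ring
      _ ≤ _ := by
          gcongr
          exact le_add_of_nonneg_left (by positivity)

/-! ### Comparison -/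

lemma covGradSq_const_mul (Ω : ℝ) {Ψ : Pt → ℂ} {x : Pt} (hΨ : DifferentiableAt ℝ Ψ x) (w : ℂ) :
    covGradSq Ω (fun y ↦ w * Ψ y) x = ‖w‖ ^ 2 * covGradSq Ω Ψ x := by
  simp only [covGradSq, covDeriv_const_mul Ω _ hΨ, norm_mul, mul_pow, mul_add]

lemma sq_mul_gpEnergy_le {Ω₀ ε a : ℝ} (hΩ : 0 < Ω₀) (hε : ε ≠ 0) {Φ : Pt → ℂ} (hΦ : gpAdm Φ)
    (bound : ∀ x ∈ B1, ‖Φ x‖ ^ 2 ≤ a) (ha : tfBound Ω₀ ≤ a) :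
    ε ^ 2 * gpEnergy ε (Ω₀ / ε) Φ ≤ tfEnergy Ω₀ (rhoTF Ω₀) +
      (ε ^ 2 * (∫ x in B1, covGradSq (Ω₀ / ε) Φ x) +
        (2 * a + Ω₀ ^ 2 / 4) * ∫ x in B1, |‖Φ x‖ ^ 2 - rhoTF Ω₀ x|) := by
  have potential := tfEnergy_le_add_integral_abs_sub Ω₀ (tfAdm_memLp_two (tfAdm_norm_sq hΦ))
    (memLp_B1_of_continuous (continuous_rhoTF hΩ) 2)
    (fun x hx ↦ (abs_of_nonneg (sq_nonneg ‖Φ x‖)).trans_le (bound x hx))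
    (fun x hx ↦ (abs_rhoTF_le hΩ hx).trans ha)
  rw [sq_mul_gpEnergy hε Ω₀ hΦ]
  linarith

lemma exists_gpAdm_of_integral_abs_sub_le {Ω₀ ε a : ℝ} (hΩ : 0 < Ω₀) (hε : ε ≠ 0) {Ψ : Pt → ℂ}
    (hΨ : ContDiff ℝ 1 Ψ) (bound : ∀ x ∈ B1, ‖Ψ x‖ ^ 2 ≤ a) (ha : tfBound Ω₀ ≤ a)
    (close : ∫ x in B1, |‖Ψ x‖ ^ 2 - rhoTF Ω₀ x| ≤ 1 / 2) :
    ∃ Φ, gpAdm Φ ∧ ε ^ 2 * gpEnergy ε (Ω₀ / ε) Φ ≤ tfEnergy Ω₀ (rhoTF Ω₀) +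
      (ε ^ 2 * (2 * ∫ x in B1, covGradSq (Ω₀ / ε) Ψ x) +
        (2 * (2 * a) + Ω₀ ^ 2 / 4) * (2 * ∫ x in B1, |‖Ψ x‖ ^ 2 - rhoTF Ω₀ x|)) := by
  have int_sq : IntegrableOn (fun x ↦ ‖Ψ x‖ ^ 2) B1 :=
    integrableOn_B1_of_continuous (hΨ.continuous.norm.pow 2)
  have int_rhoTF := integrableOn_B1_of_continuous (continuous_rhoTF hΩ)
  have a_nonneg := (tfBound_nonneg Ω₀).trans ha
  set m := ∫ x in B1, ‖Ψ x‖ ^ 2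
  have half_le : 1 / 2 ≤ m := by
    have mass_close := (abs_integral_sub_integral_le int_sq int_rhoTF).trans close
    rw [integral_rhoTF hΩ] at mass_close
    linarith [(abs_le.1 mass_close).1]
  have m_pos : 0 < m := by linarith
  have inv_le : m⁻¹ ≤ 2 := inv_le_of_inv_le₀ two_pos (by linarith)
  obtain ⟨w, norm_w_sq⟩ : ∃ w : ℂ, ‖w‖ ^ 2 = m⁻¹ :=
    ⟨(√m⁻¹ : ℝ), by rw [Complex.norm_real, norm_eq_abs, sq_abs, sq_sqrt (by positivity)]⟩
  have norm_smul_sq (x : Pt) : ‖w * Ψ x‖ ^ 2 = ‖Ψ x‖ ^ 2 / m := by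
    rw [norm_mul, mul_pow, norm_w_sq, inv_mul_eq_div]
  have adm : gpAdm fun x ↦ w * Ψ x := by
    refine gpAdm_of_contDiff (contDiff_const.mul hΨ) ?_
    simp_rw [norm_smul_sq, integral_div]
    exact div_self m_pos.ne'
  refine ⟨_, adm, (sq_mul_gpEnergy_le hΩ hε adm (a := 2 * a) (fun x hx ↦ ?_)
    (by linarith)).trans ?_⟩
  · rw [norm_mul, mul_pow, norm_w_sq]
    exact mul_le_mul inv_le (bound x hx) (by positivity) zero_le_two
  · simp_rw [covGradSq_const_mul _ (hΨ.differentiable one_ne_zero _), norm_w_sq, norm_smul_sq]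
    rw [integral_const_mul]
    gcongr
    · exact integral_nonneg fun x ↦ covGradSq_nonneg _ _ x
    · exact integral_abs_div_integral_sub_le int_sq int_rhoTF
        (.of_forall fun x ↦ sq_nonneg _) m_pos (integral_rhoTF hΩ)

lemma tendsto_mul_abs_log_nhdsGT_zero :
    Tendsto (fun ε ↦ ε * |log ε|) (nhdsWithin 0 (Set.Ioi 0)) (nhds 0) := by
  have := (tendsto_log_mul_rpow_nhdsGT_zero one_pos).abs
  rw [abs_zero] at this
  refine this.congr' ?_
  filter_upwards [self_mem_nhdsWithin] with ε hε
  rw [rpow_one, abs_mul, abs_of_pos (Set.mem_Ioi.1 hε), mul_comm]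

lemma eventually_exists_gpAdm_sq_mul_gpEnergy_le {Ω₀ : ℝ} (hΩ : 0 < Ω₀) :
    ∃ C, ∀ᶠ ε in nhdsWithin (0 : ℝ) (Set.Ioi 0), ∃ Φ, gpAdm Φ ∧
      ε ^ 2 * gpEnergy ε (Ω₀ / ε) Φ ≤ tfEnergy Ω₀ (rhoTF Ω₀) + C * (ε * |log ε|) := by
  obtain ⟨C, exists_trial⟩ := exists_trialState_bounds hΩ
  set a := tfBound Ω₀ + 1
  have close_eventually : ∀ᶠ ε in nhdsWithin (0 : ℝ) (Set.Ioi 0), C * (ε * |log ε|) ≤ 1 / 2 :=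
    (tendsto_mul_abs_log_nhdsGT_zero.const_mul C).eventually_le_const (by norm_num)
  refine ⟨2 * C + (2 * (2 * a) + Ω₀ ^ 2 / 4) * (2 * C), ?_⟩
  filter_upwards [close_eventually, Ioc_mem_nhdsGT (exp_pos (-1))] with ε close ⟨hε, hε_le⟩
  obtain ⟨F, contDiff_F, distance_le, kinetic_le⟩ := exists_trial ε hε hε_le
  obtain ⟨Φ, hΦ, energy_le⟩ := exists_gpAdm_of_integral_abs_sub_le hΩ hε.ne'
    (contDiff_trialState Ω₀ hε contDiff_F)
    (fun x hx ↦ norm_trialState_sq_le Ω₀ hε (hε_le.trans (exp_le_one_iff.2 (by norm_num))) F hx)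
    (le_add_of_nonneg_right zero_le_one) (distance_le.trans close)
  refine ⟨Φ, hΦ, energy_le.trans ?_⟩
  have a_nonneg : 0 ≤ a := add_nonneg (tfBound_nonneg Ω₀) zero_le_one
  have weighted := mul_le_mul_of_nonneg_left distance_le
    (by positivity : 0 ≤ (2 * (2 * a) + Ω₀ ^ 2 / 4) * 2)
  linarith

theorem stmt9_general (Ω₀ : ℝ) (hΩ : 0 < Ω₀) (K : ℝ) :
    ∃ (C ε₀ : ℝ), 0 < ε₀ ∧ ∀ ε : ℝ, 0 < ε → ε < ε₀ → ∀ Ψ : Pt → ℂ, gpAdm Ψ →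
      gpEnergy ε (Ω₀ / ε) Ψ ≤ gpGround ε (Ω₀ / ε) + K * |log ε| / ε →
        (∫ x in B1, |‖Ψ x‖ ^ 2 - rhoTF Ω₀ x|) ≤ C * √(ε * |log ε|) := by
  obtain ⟨C, upper_bound⟩ := eventually_exists_gpAdm_sq_mul_gpEnergy_le hΩ
  obtain ⟨ε₀, ε₀_pos, upper_bound⟩ := mem_nhdsGT_iff_exists_Ioo_subset.1 upper_bound
  refine ⟨√(π * (C + K)), ε₀, ε₀_pos, fun ε hε hε_lt Ψ hΨ near_minimal ↦ ?_⟩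
  obtain ⟨Φ, hΦ, trial_le⟩ := upper_bound ⟨hε, hε_lt⟩
  have energy_le : ε ^ 2 * gpEnergy ε (Ω₀ / ε) Ψ ≤
      tfEnergy Ω₀ (rhoTF Ω₀) + (C + K) * (ε * |log ε|) :=
    calc _ ≤ ε ^ 2 * (gpEnergy ε (Ω₀ / ε) Φ + K * |log ε| / ε) := by
          gcongr
          exact near_minimal.trans (by gcongr; exact gpGround_le_gpEnergy hε.ne' hΩ hΦ)
      _ = ε ^ 2 * gpEnergy ε (Ω₀ / ε) Φ + K * (ε * |log ε|) := by field_simp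
      _ ≤ _ := by linarith
  have deficit_le : ∫ x in B1, (‖Ψ x‖ ^ 2 - rhoTF Ω₀ x) ^ 2 ≤ (C + K) * (ε * |log ε|) := by
    linarith [tfEnergy_rhoTF_add_le_sq_mul_gpEnergy hε.ne' hΩ hΨ]
  have memLp_diff : MemLp (fun x ↦ ‖Ψ x‖ ^ 2 - rhoTF Ω₀ x) 2 (volume.restrict B1) :=
    (tfAdm_memLp_two (tfAdm_norm_sq hΨ)).sub (memLp_B1_of_continuous (continuous_rhoTF hΩ) 2)
  refine (integral_abs_le_sqrt memLp_diff).trans ?_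
  rw [measureReal_restrict_apply_univ, volume_real_B1, ← sqrt_mul' _ (by positivity), mul_assoc]
  gcongr

theorem stmt9 (Ω₀ : ℝ) (hΩ : 0 < Ω₀) :
    ∃ (C ε₀ : ℝ), 0 < ε₀ ∧ ∀ ε : ℝ, 0 < ε → ε < ε₀ →
      ∀ Ψ : Pt → ℂ, IsGPMinimizer ε (Ω₀ / ε) Ψ →
        (∫ x in B1, |‖Ψ x‖ ^ 2 - rhoTF Ω₀ x|) ≤ C * Real.sqrt (ε * |Real.log ε|) := by
  obtain ⟨C, ε₀, ε₀_pos, h⟩ := stmt9_general Ω₀ hΩ 0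
  exact ⟨C, ε₀, ε₀_pos, fun ε hε hε_lt Ψ hΨ ↦ h ε hε hε_lt Ψ hΨ.1 (by simp [hΨ.2])⟩
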